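/- For every V > 0 there exist constants K > 0 and C > 0 such that for all ν with 0 ≤ ν ≤ V, every integer k ≥ K, and every j that is the k-th positive zero of J_ν, one has | j·g(ν/j) − (k − 1/4) | ≤ C/(ν + k). -/

import Mathlib

open Real MeasureTheory Set

/-- The Bessel function of the first kind of order `ν ≥ 0`, for `x > 0`, via the
integral representation. -/
noncomputable def besselJ (ν x : ℝ) : ℝ :=
  (1 / π) * (∫ θ in (0:ℝ)..π, Real.cos (x * Real.sin θ - ν * θ)) -
    (Real.sin (ν * π) / π) * ∫ t in Set.Ioi (0:ℝ), Real.exp (-x * Real.sinh t - ν * t)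

/-- The function `g(t) = (√(1-t²) - t arccos t)/π`. -/
noncomputable def gfun (t : ℝ) : ℝ := (Real.sqrt (1 - t ^ 2) - t * Real.arccos t) / π

/-- `j` is the `k`-th positive zero of `J_ν`: `j > 0`, `J_ν(j) = 0`, and there are exactly
`k - 1` zeros of `J_ν` in `(0, j)`. -/
def IsKthZero (ν : ℝ) (k : ℕ) (j : ℝ) : Prop :=
  0 < j ∧ besselJ ν j = 0 ∧ {x : ℝ | 0 < x ∧ x < j ∧ besselJ ν x = 0}.ncard = k - 1

/-! ### Part 1: the steepest descent kernel -/

namespace BZ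

open Filter Topology Complex

/-- Gudermannian. -/
noncomputable def gd (s : ℝ) : ℝ := Real.arctan (Real.sinh s)

/-- Decay exponent along the steepest descent path. -/
noncomputable def q (s : ℝ) : ℝ := Real.cosh s - 1 / Real.cosh s

/-- Steepest descent path. -/
noncomputable def w (s : ℝ) : ℂ := (s : ℂ) + (gd s : ℂ) * I

/-- Exponential factor. -/
noncomputable def ee (ν x s : ℝ) : ℂ := Complex.exp (-((x * q s : ℝ) : ℂ) - (ν : ℂ) * w s)

/-- Velocity of the path. -/
noncomputable def w' (s : ℝ) : ℂ := 1 + ((1 / Real.cosh s : ℝ) : ℂ) * I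

/-- Amplitude function. -/
noncomputable def G (ν x : ℝ) : ℂ := ∫ s : ℝ, ee ν x s * w' s

lemma cos_gd (s : ℝ) : Real.cos (gd s) = 1 / Real.cosh s := by
  rw [gd, Real.cos_arctan, ← Real.cosh_sq', Real.sqrt_sq (Real.cosh_pos s).le]

lemma sin_gd (s : ℝ) : Real.sin (gd s) = Real.sinh s / Real.cosh s := by
  rw [gd, Real.sin_arctan, ← Real.cosh_sq', Real.sqrt_sq (Real.cosh_pos s).le]

lemma hasDerivAt_gd (s : ℝ) : HasDerivAt gd (1 / Real.cosh s) s := by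
  have h := (Real.hasDerivAt_sinh s).arctan
  have hc := (Real.cosh_pos s).ne'
  have e : 1 / (1 + Real.sinh s ^ 2) * Real.cosh s = 1 / Real.cosh s := by
    rw [← Real.cosh_sq']
    field_simp
  rw [e] at h
  exact h

lemma gd_neg (s : ℝ) : gd (-s) = -gd s := by simp [gd]

lemma w_neg (s : ℝ) : w (-s) = -w s := by simp [w, gd_neg]; ring

lemma q_neg (s : ℝ) : q (-s) = q s := by simp [q]

lemma w'_neg (s : ℝ) : w' (-s) = w' s := by simp [w']

lemma inv_cosh_pos (s : ℝ) : 0 < 1 / Real.cosh s := by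
  have := Real.cosh_pos s; positivity

lemma inv_cosh_le (s : ℝ) : 1 / Real.cosh s ≤ 1 := by
  rw [div_le_one (Real.cosh_pos s)]; exact Real.one_le_cosh s

lemma abs_gd_le (s : ℝ) : |gd s| ≤ |s| := by
  have h := Convex.norm_image_sub_le_of_norm_hasDerivWithin_le (f := gd)
    (f' := fun s => 1 / Real.cosh s) (C := 1) (s := Set.univ) (x := 0) (y := s)
    (fun x _ => (hasDerivAt_gd x).hasDerivWithinAt)
    (fun x _ => by
      rw [Real.norm_eq_abs, abs_of_pos (inv_cosh_pos x)]; exact inv_cosh_le x)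
    convex_univ (Set.mem_univ _) (Set.mem_univ _)
  simpa [gd] using h

lemma norm_w_le (s : ℝ) : ‖w s‖ ≤ 2 * |s| := by
  have h1 : ‖w s‖ ≤ |s| + |gd s| := by
    refine (norm_add_le _ _).trans ?_
    simp
  linarith [abs_gd_le s]

lemma cosh_ge (s : ℝ) : 1 + s ^ 2 / 2 ≤ Real.cosh s := by
  have h1 : Real.cosh s = 1 + 2 * Real.sinh (s / 2) ^ 2 := by
    have := Real.cosh_two_mul (s / 2)
    rw [show 2 * (s / 2) = s by ring] at this
    rw [this, Real.cosh_sq']; ring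
  have h2 : (s / 2) ^ 2 ≤ Real.sinh (s / 2) ^ 2 := by
    rw [sq_le_sq, Real.abs_sinh]
    exact Real.self_le_sinh_iff.2 (abs_nonneg _)
  rw [h1]; nlinarith

lemma q_ge (s : ℝ) : s ^ 2 / 2 ≤ q s := by
  unfold q; linarith [cosh_ge s, inv_cosh_le s]

lemma q_nonneg (s : ℝ) : 0 ≤ q s := le_trans (by positivity) (q_ge s)

lemma cosh_le_exp_abs (s : ℝ) : Real.cosh s ≤ Real.exp |s| := by
  rw [← Real.cosh_abs, Real.cosh_eq]
  have : Real.exp (-|s|) ≤ Real.exp |s| := Real.exp_le_exp.2 (by linarith [abs_nonneg s])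
  linarith

lemma q_le (s : ℝ) : q s ≤ Real.exp |s| := by
  unfold q; linarith [cosh_le_exp_abs s, inv_cosh_pos s]

lemma w_re (s : ℝ) : (w s).re = s := by simp [w]
lemma w_im (s : ℝ) : (w s).im = gd s := by simp [w]

lemma continuous_gd : Continuous gd := by unfold gd; fun_prop
lemma continuous_q : Continuous q := by
  unfold q
  exact Real.continuous_cosh.sub (continuous_const.div Real.continuous_cosh
    fun s => (Real.cosh_pos s).ne')
lemma continuous_w : Continuous w := by
  unfold w; have := continuous_gd; fun_prop
lemma continuous_w' : Continuous w' := by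
  unfold w'
  have : Continuous fun s : ℝ => 1 / Real.cosh s := continuous_const.div Real.continuous_cosh
    fun s => (Real.cosh_pos s).ne'
  fun_prop
lemma continuous_ee (ν x : ℝ) : Continuous (ee ν x) := by
  unfold ee; have := continuous_w; have := continuous_q; fun_prop

lemma hasDerivAt_w (s : ℝ) : HasDerivAt w (w' s) s := by
  unfold w w'
  have h1 : HasDerivAt (fun s : ℝ => (s : ℂ)) 1 s := by
    simpa using (hasDerivAt_id s).ofReal_comp
  exact h1.add ((hasDerivAt_gd s).ofReal_comp.mul_const I)

lemma hasDerivAt_q (s : ℝ) : HasDerivAt q (Real.sinh s + Real.sinh s / Real.cosh s ^ 2) s := by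
  unfold q
  have h := (Real.hasDerivAt_cosh s).sub ((hasDerivAt_const s (1:ℝ)).div
    (Real.hasDerivAt_cosh s) (Real.cosh_pos s).ne')
  refine h.congr_deriv ?_
  simp only [zero_mul, one_mul, zero_sub]
  ring

/-- `exp (w s)` explicitly. -/
lemma exp_w (s : ℝ) : Complex.exp (w s) =
    1 + (q s : ℂ) * I + ((Real.sinh s / Real.cosh s : ℝ) : ℂ) + ((Real.sinh s : ℝ) : ℂ) * I := by
  have hc := (Real.cosh_pos s).ne'
  apply Complex.ext
  · rw [Complex.exp_re, w_re, w_im, cos_gd, ← Real.cosh_add_sinh]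
    simp only [add_re, one_re, mul_re, ofReal_re, ofReal_im, I_re, I_im]
    field_simp
    ring
  · rw [Complex.exp_im, w_re, w_im, sin_gd, ← Real.cosh_add_sinh]
    simp only [add_im, one_im, mul_im, ofReal_re, ofReal_im, I_re, I_im, q]
    field_simp
    have := Real.cosh_sq' s
    linear_combination -this

lemma exp_neg_w (s : ℝ) : Complex.exp (-w s) =
    1 + (q s : ℂ) * I - ((Real.sinh s / Real.cosh s : ℝ) : ℂ) - ((Real.sinh s : ℝ) : ℂ) * I := by
  rw [← w_neg, exp_w]
  simp [q_neg]
  ring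

lemma cosh_w (s : ℝ) : Complex.cosh (w s) = 1 + (q s : ℂ) * I := by
  rw [Complex.cosh, exp_w, exp_neg_w]; ring

/-- master bound -/
noncomputable def mb (x c s : ℝ) : ℝ := Real.exp (-x * q s + c * |s|)

lemma mb_le {x : ℝ} (hx : 0 < x) (c s : ℝ) :
    mb x c s ≤ Real.exp (c ^ 2 / x) * Real.exp (-(x / 4) * s ^ 2) := by
  unfold mb
  rw [← Real.exp_add]
  apply Real.exp_le_exp.2
  have h1 := mul_le_mul_of_nonneg_left (q_ge s) hx.le
  have h2 : c * |s| ≤ c ^ 2 / x + x / 4 * s ^ 2 := by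
    have : 0 ≤ (c - x / 2 * |s|) ^ 2 / x := by positivity
    have h3 : (c - x / 2 * |s|) ^ 2 / x = c ^ 2 / x - c * |s| + x / 4 * |s| ^ 2 := by
      field_simp; ring
    rw [h3, sq_abs] at this
    linarith
  linarith

lemma continuous_mb (x c : ℝ) : Continuous (mb x c) := by
  unfold mb; have := continuous_q; fun_prop

lemma integrable_mb {x : ℝ} (hx : 0 < x) (c : ℝ) : Integrable (mb x c) := by
  refine Integrable.mono' ((integrable_exp_neg_mul_sq (by positivity : 0 < x / 4)).const_mul
    (Real.exp (c ^ 2 / x))) (continuous_mb x c).aestronglyMeasurable (ae_of_all _ fun s => ?_)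
  rw [Real.norm_eq_abs, abs_of_pos (show 0 < mb x c s from Real.exp_pos _)]
  exact mb_le hx c s

lemma tendsto_mb {x : ℝ} (hx : 0 < x) (c : ℝ) {l : Filter ℝ} (hl : Tendsto (fun s => |s|) l atTop) :
    Tendsto (mb x c) l (𝓝 0) := by
  have h0 : Tendsto (fun s : ℝ => Real.exp (c ^ 2 / x) * Real.exp (-(x / 4 * |s| ^ 2))) l (𝓝 0) := by
    rw [← mul_zero (Real.exp (c ^ 2 / x))]
    apply Tendsto.const_mul
    apply Real.tendsto_exp_neg_atTop_nhds_zero.comp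
    apply Tendsto.const_mul_atTop (by positivity)
    exact (tendsto_pow_atTop two_ne_zero).comp hl
  refine squeeze_zero (fun s => (Real.exp_pos _).le) (fun s => ?_) h0
  have := mb_le hx c s
  rwa [← sq_abs s, neg_mul] at this

lemma norm_ee (ν x s : ℝ) : ‖ee ν x s‖ = Real.exp (-x * q s - ν * s) := by
  rw [ee, Complex.norm_exp]
  simp [w_re]

lemma norm_ee_le (ν x s : ℝ) : ‖ee ν x s‖ ≤ mb x |ν| s := by
  rw [norm_ee, mb]
  apply Real.exp_le_exp.2
  have := neg_abs_le (ν * s)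
  rw [abs_mul] at this
  linarith

lemma norm_w'_le (s : ℝ) : ‖w' s‖ ≤ 2 := by
  unfold w'
  refine (norm_add_le _ _).trans ?_
  rw [norm_mul, Complex.norm_I, Complex.norm_real, Real.norm_eq_abs, abs_of_pos (inv_cosh_pos s)]
  simp only [norm_one]
  linarith [inv_cosh_le s]

lemma norm_ker_le (ν x s : ℝ) : ‖ee ν x s * w' s‖ ≤ 2 * mb x |ν| s := by
  rw [norm_mul, mul_comm]
  exact mul_le_mul (norm_w'_le s) (norm_ee_le ν x s) (norm_nonneg _) (by norm_num)

lemma integrable_ker (ν : ℝ) {x : ℝ} (hx : 0 < x) : Integrable (fun s => ee ν x s * w' s) := by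
  refine Integrable.mono' ((integrable_mb hx |ν|).const_mul 2)
    ((continuous_ee ν x).mul continuous_w').aestronglyMeasurable
    (ae_of_all _ fun s => norm_ker_le ν x s)

lemma ee_shift (ν x s : ℝ) : ee (ν + 1) x s = Complex.exp (-w s) * ee ν x s := by
  rw [ee, ee, ← Complex.exp_add]; congr 1; push_cast; ring

lemma ee_shift' (ν x s : ℝ) : ee (ν - 1) x s = Complex.exp (w s) * ee ν x s := by
  rw [ee, ee, ← Complex.exp_add]; congr 1; push_cast; ring

lemma hasDerivAt_ee (ν x s : ℝ) : HasDerivAt (ee ν x)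
    (ee ν x s * w' s * (I * x * (((Real.sinh s / Real.cosh s : ℝ) : ℂ) +
      ((Real.sinh s : ℝ) : ℂ) * I) - ν)) s := by
  have h1 := (((hasDerivAt_q s).const_mul x).ofReal_comp.neg.sub
    ((hasDerivAt_w s).const_mul (ν : ℂ))).cexp
  have hc : (Real.cosh s : ℂ) ≠ 0 := by exact_mod_cast (Real.cosh_pos s).ne'
  refine h1.congr_deriv ?_
  unfold ee
  rw [mul_assoc]
  simp only [Pi.sub_apply, Pi.neg_apply]
  congr 1
  unfold w'
  push_cast at hc ⊢
  field_simp
  ring_nf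
  simp only [I_sq, show I ^ 3 = -I by rw [pow_succ, I_sq]; ring]
  ring

lemma hasDerivAt_G (ν : ℝ) {x : ℝ} (hx : 0 < x) :
    Integrable (fun s => -(q s : ℂ) * (ee ν x s * w' s)) ∧
    HasDerivAt (fun y : ℝ => G ν y) (∫ s : ℝ, -(q s : ℂ) * (ee ν x s * w' s)) x := by
  refine hasDerivAt_integral_of_dominated_loc_of_deriv_le (s := Set.Ioi (x / 2))
    (F := fun y s => ee ν y s * w' s) (F' := fun y s => -(q s : ℂ) * (ee ν y s * w' s))
    (bound := fun s => 2 * mb (x / 2) (|ν| + 1) s) (Ioi_mem_nhds (by linarith)) ?_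
    (integrable_ker ν hx) ?_ ?_ ((integrable_mb (by linarith) _).const_mul 2) ?_
  · exact Eventually.of_forall fun y => ((continuous_ee ν y).mul continuous_w').aestronglyMeasurable
  · have h1 := continuous_q
    have h2 := (continuous_ee ν x).mul continuous_w'
    have h3 : Continuous fun s : ℝ => -(q s : ℂ) := by fun_prop
    exact (h3.mul h2).aestronglyMeasurable
  · refine ae_of_all _ fun s y hy => ?_
    rw [norm_mul, norm_neg, Complex.norm_real, Real.norm_eq_abs, abs_of_nonneg (q_nonneg s)]
    calc q s * ‖ee ν y s * w' s‖ ≤ Real.exp |s| * (2 * mb (x / 2) |ν| s) := by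
          apply mul_le_mul (q_le s) _ (norm_nonneg _) (Real.exp_pos _).le
          refine (norm_ker_le ν y s).trans ?_
          have : mb y |ν| s ≤ mb (x / 2) |ν| s := by
            unfold mb
            apply Real.exp_le_exp.2
            have := mul_le_mul_of_nonneg_right (le_of_lt hy) (q_nonneg s)
            linarith
          linarith
      _ = 2 * mb (x / 2) (|ν| + 1) s := by
          unfold mb
          rw [mul_left_comm, ← Real.exp_add]
          congr 2; ring
  · refine ae_of_all _ fun s y _ => ?_
    have h0 : HasDerivAt (fun y : ℝ => ((y * q s : ℝ) : ℂ)) (q s : ℂ) y := by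
      simpa using ((hasDerivAt_id y).mul_const (q s)).ofReal_comp
    have h1 := ((h0.neg.sub_const ((ν : ℂ) * w s)).cexp).mul_const (w' s)
    refine h1.congr_deriv ?_
    simp only [ee, Pi.neg_apply]; ring

lemma integral_parts (ν : ℝ) {x : ℝ} (hx : 0 < x) :
    ∫ s : ℝ, (ee ν x s * w' s * (I * x * (((Real.sinh s / Real.cosh s : ℝ) : ℂ) +
      ((Real.sinh s : ℝ) : ℂ) * I) - ν)) = 0 := by
  have hintg : Integrable (fun s : ℝ => (ee ν x s * w' s *
      (I * x * (((Real.sinh s / Real.cosh s : ℝ) : ℂ) +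
      ((Real.sinh s : ℝ) : ℂ) * I) - ν))) := by
    have h1 := ((integrable_ker (ν - 1) hx).sub (integrable_ker (ν + 1) hx)).const_mul (I * x / 2)
    have h2 := (integrable_ker ν hx).const_mul (ν : ℂ)
    refine (h1.sub h2).congr (ae_of_all _ fun s => ?_)
    simp only [Pi.sub_apply, ee_shift, ee_shift', exp_w, exp_neg_w]
    ring
  have ht : ∀ l : Filter ℝ, Tendsto (fun s => |s|) l atTop → Tendsto (ee ν x) l (𝓝 0) := by
    intro l hl
    exact squeeze_zero_norm (fun s => norm_ee_le ν x s) (tendsto_mb hx _ hl)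
  rw [integral_of_hasDerivAt_of_tendsto (hasDerivAt_ee ν x) hintg
    (ht _ tendsto_abs_atBot_atTop) (ht _ tendsto_abs_atTop_atTop), sub_zero]

/-- The Hankel function. -/
noncomputable def H (ν x : ℝ) : ℂ :=
  (1 / π : ℝ) * Complex.exp (((x - ν * π / 2 - π / 2 : ℝ) : ℂ) * I) * G ν x

lemma H_succ (ν x : ℝ) : H (ν + 1) x =
  (1 / π : ℝ) * Complex.exp (((x - ν * π / 2 - π / 2 : ℝ) : ℂ) * I) * (-I * G (ν + 1) x) := by
  have : Complex.exp (((x - (ν + 1) * π / 2 - π / 2 : ℝ) : ℂ) * I) =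
      Complex.exp (((x - ν * π / 2 - π / 2 : ℝ) : ℂ) * I) * (-I) := by
    rw [← Complex.exp_neg_pi_div_two_mul_I, ← Complex.exp_add]
    congr 1; push_cast; ring
  rw [H, this]; ring

lemma H_pred (ν x : ℝ) : H (ν - 1) x =
  (1 / π : ℝ) * Complex.exp (((x - ν * π / 2 - π / 2 : ℝ) : ℂ) * I) * (I * G (ν - 1) x) := by
  have : Complex.exp (((x - (ν - 1) * π / 2 - π / 2 : ℝ) : ℂ) * I) =
      Complex.exp (((x - ν * π / 2 - π / 2 : ℝ) : ℂ) * I) * I := by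
    have h2 := Complex.exp_pi_div_two_mul_I
    have h3 : ((x - (ν - 1) * π / 2 - π / 2 : ℝ) : ℂ) * I =
      ((x - ν * π / 2 - π / 2 : ℝ) : ℂ) * I + (π / 2 * I) := by push_cast; ring
    rw [h3, Complex.exp_add, h2]
  rw [H, this]; ring

lemma hasDerivAt_H_aux (ν : ℝ) {x : ℝ} (hx : 0 < x) : HasDerivAt (fun y : ℝ => H ν y)
    ((1 / π : ℝ) * Complex.exp (((x - ν * π / 2 - π / 2 : ℝ) : ℂ) * I) *
      (I * G ν x + ∫ s : ℝ, -(q s : ℂ) * (ee ν x s * w' s))) x := by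
  have h0 : HasDerivAt (fun y : ℝ => ((y - ν * π / 2 - π / 2 : ℝ) : ℂ) * I) (1 * I) x := by
    have := ((((hasDerivAt_id x).sub_const (ν * π / 2)).sub_const (π / 2)).ofReal_comp).mul_const I
    simpa using this
  have h1 := (h0.cexp.const_mul ((1 / π : ℝ) : ℂ)).mul (hasDerivAt_G ν hx).2
  refine h1.congr_deriv ?_
  ring

lemma int4 {a b c d : ℝ → ℂ} (ha : Integrable a) (hb : Integrable b) (hc : Integrable c)
    (hd : Integrable d) : (∫ s, a s) + (∫ s, b s) + (∫ s, c s) + (∫ s, d s) =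
      ∫ s, (a s + b s + c s + d s) := by
  have h1 : ∫ s, (a s + b s + c s + d s) = (∫ s, (a s + b s + c s)) + ∫ s, d s :=
    integral_add ((ha.add hb).add hc) hd
  have h2 : ∫ s, (a s + b s + c s) = (∫ s, (a s + b s)) + ∫ s, c s :=
    integral_add (ha.add hb) hc
  rw [h1, h2, integral_add ha hb]

lemma hasDerivAt_H (ν : ℝ) {x : ℝ} (hx : 0 < x) : HasDerivAt (fun y : ℝ => H ν y)
    ((ν / x : ℝ) * H ν x - H (ν + 1) x) x := by
  convert hasDerivAt_H_aux ν hx using 1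
  rw [H_succ, H]
  have hxc : (x : ℂ) ≠ 0 := by exact_mod_cast hx.ne'
  have key : I * G ν x + (∫ s : ℝ, -(q s : ℂ) * (ee ν x s * w' s)) + (-(ν / x : ℝ) : ℂ) * G ν x
      + (-I) * G (ν + 1) x = 0 := by
    have hp := integral_parts ν hx
    unfold G
    rw [← integral_const_mul, ← integral_const_mul, ← integral_const_mul,
      int4 ((integrable_ker ν hx).const_mul _) (hasDerivAt_G ν hx).1
      ((integrable_ker ν hx).const_mul _) ((integrable_ker (ν + 1) hx).const_mul _)]
    have : (0 : ℂ) = (1 / x) * 0 := by simp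
    rw [this, ← hp, ← integral_const_mul]
    congr 1
    ext s
    rw [ee_shift, exp_neg_w]
    push_cast
    field_simp
    ring_nf
    simp only [I_sq]
    ring
  linear_combination -((1 / π : ℝ) * Complex.exp (((x - ν * π / 2 - π / 2 : ℝ) : ℂ) * I)) * key

lemma hasDerivAt_H' (ν : ℝ) {x : ℝ} (hx : 0 < x) : HasDerivAt (fun y : ℝ => H ν y)
    (H (ν - 1) x - (ν / x : ℝ) * H ν x) x := by
  convert hasDerivAt_H_aux ν hx using 1
  rw [H_pred, H]
  have hxc : (x : ℂ) ≠ 0 := by exact_mod_cast hx.ne'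
  have key : I * G ν x + (∫ s : ℝ, -(q s : ℂ) * (ee ν x s * w' s)) + ((ν / x : ℝ) : ℂ) * G ν x
      + (-I) * G (ν - 1) x = 0 := by
    have hp := integral_parts ν hx
    unfold G
    rw [← integral_const_mul, ← integral_const_mul, ← integral_const_mul,
      int4 ((integrable_ker ν hx).const_mul _) (hasDerivAt_G ν hx).1
      ((integrable_ker ν hx).const_mul _) ((integrable_ker (ν - 1) hx).const_mul _)]
    have : (0 : ℂ) = (-1 / x) * 0 := by simp
    rw [this, ← hp, ← integral_const_mul]
    congr 1
    ext s
    rw [ee_shift', exp_w]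
    push_cast
    field_simp
    ring_nf
    simp only [I_sq]
    ring
  linear_combination -((1 / π : ℝ) * Complex.exp (((x - ν * π / 2 - π / 2 : ℝ) : ℂ) * I)) * key

end BZ

/-! ### Part 2: contour deformation -/

namespace BZ

open Filter Topology Complex

/-- The entire integrand. -/
noncomputable def ff (ν x : ℝ) (z : ℂ) : ℂ := Complex.exp (I * x * Complex.cosh z - ν * z)

lemma ff_w (ν x s : ℝ) : ff ν x (w s) = Complex.exp (I * x) * ee ν x s := by
  rw [ff, ee, cosh_w, ← Complex.exp_add]
  congr 1
  push_cast
  linear_combination (x * q s : ℂ) * I_sq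

lemma norm_ff (ν x a b : ℝ) : ‖ff ν x (a + b * I)‖ =
    Real.exp (-x * Real.sinh a * Real.sin b - ν * a) := by
  rw [ff, Complex.norm_exp]
  congr 1
  rw [Complex.cosh_add, Complex.cosh_mul_I, Complex.sinh_mul_I, ← Complex.ofReal_cosh,
    ← Complex.ofReal_sinh, ← Complex.ofReal_cos, ← Complex.ofReal_sin]
  simp only [Complex.sub_re, Complex.mul_re, Complex.add_re, Complex.add_im, Complex.mul_im,
    Complex.ofReal_re, Complex.ofReal_im, Complex.I_re, Complex.I_im]
  ring

lemma ff_top (ν x s : ℝ) : ff ν x (s + (π / 2 : ℝ) * I) =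
    Complex.exp (-(ν * π / 2 : ℝ) * I) * (Real.exp (-x * Real.sinh s - ν * s) : ℝ) := by
  rw [ff, Complex.ofReal_exp, ← Complex.exp_add]
  congr 1
  rw [Complex.cosh_add, Complex.cosh_mul_I, Complex.sinh_mul_I, ← Complex.ofReal_cosh,
    ← Complex.ofReal_sinh, ← Complex.ofReal_cos, ← Complex.ofReal_sin, Real.cos_pi_div_two,
    Real.sin_pi_div_two]
  push_cast
  linear_combination (x * Complex.sinh s : ℂ) * I_sq

lemma ff_bot (ν x s : ℝ) : ff ν x (-(s + (π / 2 : ℝ) * I)) =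
    Complex.exp ((ν * π / 2 : ℝ) * I) * (Real.exp (-x * Real.sinh s + ν * s) : ℝ) := by
  have h := ff_top (-ν) x s
  rw [ff] at h ⊢
  rw [Complex.cosh_neg]
  push_cast at h ⊢
  convert h using 2
  · ring
  · congr 1; ring
  · ring_nf

lemma ff_mid (ν x θ : ℝ) : ff ν x ((θ - π / 2 : ℝ) * I) =
    Complex.exp ((ν * π / 2 : ℝ) * I) * Complex.exp ((x * Real.sin θ - ν * θ : ℝ) * I) := by
  rw [ff, ← Complex.exp_add]
  congr 1
  rw [Complex.cosh_mul_I, ← Complex.ofReal_cos, Real.cos_sub_pi_div_two]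
  push_cast
  ring

lemma continuous_ff (ν x : ℝ) : Continuous (ff ν x) := by
  unfold ff
  have := Complex.continuous_cosh
  fun_prop

lemma sinh_ge (s : ℝ) (hs : 0 ≤ s) : q s ≤ Real.sinh s + 1 := by
  have h1 := Real.cosh_sub_sinh s
  have h2 : Real.exp (-s) ≤ 1 := Real.exp_le_one_iff.2 (by linarith)
  unfold q
  linarith [inv_cosh_pos s]

lemma integrableOn_tail (c : ℝ) {x : ℝ} (hx : 0 < x) :
    IntegrableOn (fun s => Real.exp (-x * Real.sinh s + c * s)) (Set.Ioi 0) := by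
  refine Integrable.mono' (((integrable_mb hx |c|).const_mul (Real.exp x)).integrableOn)
    (Continuous.aestronglyMeasurable (by fun_prop)) ?_
  refine (ae_restrict_iff' measurableSet_Ioi).2 (ae_of_all _ fun s hs => ?_)
  have hs : 0 < s := hs
  rw [Real.norm_eq_abs, abs_of_pos (Real.exp_pos _), mb, ← Real.exp_add]
  apply Real.exp_le_exp.2
  have h1 := mul_le_mul_of_nonneg_left (sinh_ge s hs.le) hx.le
  have h2 := le_abs_self (c * s)
  rw [abs_mul] at h2
  linarith

/-- vertical segment bound -/
lemma segment_bound (ν : ℝ) {x : ℝ} (hx : 0 < x) (F : ℂ → ℂ) (hF : ∀ z, HasDerivAt F (ff ν x z) z)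
    {R : ℝ} (hR : 0 ≤ R) (ε : ℝ) (hε : ε = 1 ∨ ε = -1) :
    ‖F (ε * (R + (π / 2 : ℝ) * I)) - F (ε * w R)‖ ≤ π * mb x |ν| R := by
  have hd : ∀ b : ℝ, HasDerivAt (fun b : ℝ => F (ε * (R + b * I)))
      (ff ν x (ε * (R + b * I)) * (ε * I)) b := by
    intro b
    have h0 : HasDerivAt (fun b : ℝ => (ε : ℂ) * (R + b * I)) (ε * I) b := by
      have h1 : HasDerivAt (fun s : ℝ => (s : ℂ)) 1 b := by
        simpa using (hasDerivAt_id b).ofReal_comp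
      simpa using ((h1.mul_const I).const_add (R : ℂ)).const_mul (ε : ℂ)
    exact (hF _).comp b h0
  have hg0 : 0 ≤ gd R := by
    unfold gd; exact Real.arctan_nonneg.2 (Real.sinh_nonneg_iff.2 hR)
  have hg1 : gd R ≤ π / 2 := (Real.arctan_lt_pi_div_two _).le
  have hε1 : |ε| = 1 := by rcases hε with h | h <;> simp [h]
  have hε2 : ε * ε = 1 := by rcases hε with h | h <;> simp [h]
  have h := Convex.norm_image_sub_le_of_norm_hasDerivWithin_le
    (f := fun b : ℝ => F (ε * (R + b * I))) (C := mb x |ν| R) (s := Set.Icc (gd R) (π / 2))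
    (x := gd R) (y := π / 2) (fun b _ => (hd b).hasDerivWithinAt)
    (fun b hb => by
      have e : (ε : ℂ) * (R + b * I) = ((ε * R : ℝ) : ℂ) + ((ε * b : ℝ) : ℂ) * I := by
        push_cast; ring
      rw [norm_mul, e, norm_ff, norm_mul, Complex.norm_I, Complex.norm_real, Real.norm_eq_abs, hε1,
        mul_one, mul_one, mb]
      apply Real.exp_le_exp.2
      have e1 : Real.sinh (ε * R) * Real.sin (ε * b) = Real.sinh R * Real.sin b := by
        rcases hε with h | h <;> simp [h]
      have e2 : Real.sin (gd R) ≤ Real.sin b :=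
        Real.sin_le_sin_of_le_of_le_pi_div_two (by linarith [Real.pi_pos]) hb.2 hb.1
      have e3 : Real.sinh R * Real.sin (gd R) = q R := by
        rw [sin_gd, q]
        have hc := (Real.cosh_pos R).ne'
        field_simp
        linarith [Real.cosh_sq' R]
      have e4 := mul_le_mul_of_nonneg_left e2 (Real.sinh_nonneg_iff.2 hR)
      have e5 := neg_abs_le (ν * (ε * R))
      rw [abs_mul, abs_mul, hε1, one_mul] at e5
      have e6 := mul_le_mul_of_nonneg_left e4 hx.le
      rw [mul_assoc, e1]
      rw [e3] at e6
      linarith)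
    (convex_Icc _ _) ⟨le_rfl, hg1⟩ ⟨hg1, le_rfl⟩
  refine (h.trans ?_)
  rw [mul_comm]
  apply mul_le_mul_of_nonneg_right _ (Real.exp_pos _).le
  rw [Real.norm_eq_abs, abs_of_nonneg (by linarith)]
  linarith [Real.pi_pos]

lemma contour (ν : ℝ) {x : ℝ} (hx : 0 < x) :
    Complex.exp (I * x) * G ν x =
      (∫ s in Set.Ioi (0:ℝ), ff ν x (s + (π / 2 : ℝ) * I)) +
      (∫ θ in (0:ℝ)..π, ff ν x ((θ - π / 2 : ℝ) * I) * I) +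
      ∫ s in Set.Ioi (0:ℝ), ff ν x (-(s + (π / 2 : ℝ) * I)) := by
  have hdiff : Differentiable ℂ (ff ν x) := by
    unfold ff
    have := Complex.differentiable_cosh
    fun_prop
  obtain ⟨F, hF⟩ := hdiff.isExactOn_univ
  replace hF : ∀ z, HasDerivAt F (ff ν x z) z := fun z => hF z (Set.mem_univ z)
  have hcont := continuous_ff ν x
  have hid : ∀ b : ℝ, HasDerivAt (fun s : ℝ => (s : ℂ)) 1 b := fun b => by
    simpa using (hasDerivAt_id b).ofReal_comp
  -- main path
  have hG : Tendsto (fun R : ℝ => ∫ s in (-R)..R, ff ν x (w s) * w' s) atTop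
      (𝓝 (Complex.exp (I * x) * G ν x)) := by
    have h := intervalIntegral_tendsto_integral ((integrable_ker ν hx).const_mul
      (Complex.exp (I * x))) tendsto_neg_atTop_atBot (tendsto_id (α := ℝ))
    rw [integral_const_mul] at h
    refine h.congr fun R => ?_
    simp only [ff_w, id, mul_assoc]
  have hG' : ∀ R : ℝ, ∫ s in (-R)..R, ff ν x (w s) * w' s = F (w R) - F (-w R) := by
    intro R
    rw [← w_neg]
    apply intervalIntegral.integral_eq_sub_of_hasDerivAt (f := fun s => F (w s))
    · intro s _
      exact (hF _).comp s (hasDerivAt_w s)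
    · exact ((hcont.comp continuous_w).mul continuous_w').intervalIntegrable _ _
  -- top
  have hT : Tendsto (fun R : ℝ => ∫ s in (0:ℝ)..R, ff ν x (s + (π / 2 : ℝ) * I)) atTop
      (𝓝 (∫ s in Set.Ioi (0:ℝ), ff ν x (s + (π / 2 : ℝ) * I))) := by
    apply intervalIntegral_tendsto_integral_Ioi 0 _ tendsto_id
    have := ((integrableOn_tail (-ν) hx).ofReal (𝕜 := ℂ)).const_mul
      (Complex.exp (-(ν * π / 2 : ℝ) * I))
    refine this.congr (ae_of_all _ fun s => ?_)
    simp only [ff_top]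
    congr 3
    ring
  have hT' : ∀ R : ℝ, ∫ s in (0:ℝ)..R, ff ν x (s + (π / 2 : ℝ) * I) =
      F (R + (π / 2 : ℝ) * I) - F ((π / 2 : ℝ) * I) := by
    intro R
    have := intervalIntegral.integral_eq_sub_of_hasDerivAt (a := 0) (b := R)
      (f := fun s : ℝ => F (s + (π / 2 : ℝ) * I)) (f' := fun s : ℝ => ff ν x (s + (π / 2 : ℝ) * I))
      (fun s _ => by
        have h2 := (hF _).comp s ((hid s).add_const ((π / 2 : ℝ) * I : ℂ))
        exact h2.congr_deriv (by simp))
      ((hcont.comp (by fun_prop)).intervalIntegrable _ _)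
    rw [this]; simp
  -- bottom
  have hB : Tendsto (fun R : ℝ => ∫ s in (0:ℝ)..R, ff ν x (-(s + (π / 2 : ℝ) * I))) atTop
      (𝓝 (∫ s in Set.Ioi (0:ℝ), ff ν x (-(s + (π / 2 : ℝ) * I)))) := by
    apply intervalIntegral_tendsto_integral_Ioi 0 _ tendsto_id
    have := ((integrableOn_tail ν hx).ofReal (𝕜 := ℂ)).const_mul
      (Complex.exp ((ν * π / 2 : ℝ) * I))
    refine this.congr (ae_of_all _ fun s => ?_)
    simp only [ff_bot]
    rfl
  have hB' : ∀ R : ℝ, ∫ s in (0:ℝ)..R, ff ν x (-(s + (π / 2 : ℝ) * I)) =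
      F (-((π / 2 : ℝ) * I)) - F (-(R + (π / 2 : ℝ) * I)) := by
    intro R
    have := intervalIntegral.integral_eq_sub_of_hasDerivAt (a := 0) (b := R)
      (f := fun s : ℝ => -F (-(s + (π / 2 : ℝ) * I)))
      (f' := fun s : ℝ => ff ν x (-(s + (π / 2 : ℝ) * I)))
      (fun s _ => by
        have h2 := ((hF _).comp s ((hid s).add_const ((π / 2 : ℝ) * I : ℂ)).neg).neg
        exact h2.congr_deriv (by simp))
      ((hcont.comp (by fun_prop)).intervalIntegrable _ _)
    rw [this]; simp; ring
  have hM : ∫ θ in (0:ℝ)..π, ff ν x ((θ - π / 2 : ℝ) * I) * I =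
      F ((π / 2 : ℝ) * I) - F (-((π / 2 : ℝ) * I)) := by
    have := intervalIntegral.integral_eq_sub_of_hasDerivAt (a := 0) (b := π)
      (f := fun s : ℝ => F ((s - π / 2 : ℝ) * I))
      (f' := fun s : ℝ => ff ν x ((s - π / 2 : ℝ) * I) * I)
      (fun s _ => by
        have h1 := ((((hasDerivAt_id s).sub_const (π / 2)).ofReal_comp).mul_const I)
        have h2 := (hF _).comp s h1
        exact h2.congr_deriv (by simp))
      (((hcont.comp (by fun_prop)).mul continuous_const).intervalIntegrable _ _)
    rw [this]
    congr 2
    · congr 2; ring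
    · push_cast; ring
  have hlim : Tendsto (fun R : ℝ => (F (R + (π / 2 : ℝ) * I) - F (w R)) -
      (F (-(R + (π / 2 : ℝ) * I)) - F (-w R))) atTop (𝓝 0) := by
    rw [← sub_zero (0 : ℂ)]
    have hm : Tendsto (fun R : ℝ => π * mb x |ν| R) atTop (𝓝 0) := by
      simpa using (tendsto_mb hx |ν| tendsto_abs_atTop_atTop).const_mul π
    apply Tendsto.sub
    · refine squeeze_zero_norm' ?_ hm
      filter_upwards [eventually_ge_atTop 0] with R hR
      simpa using segment_bound ν hx F hF hR 1 (Or.inl rfl)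
    · refine squeeze_zero_norm' ?_ hm
      filter_upwards [eventually_ge_atTop 0] with R hR
      have := segment_bound ν hx F hF hR (-1) (Or.inr rfl)
      push_cast at this ⊢
      simpa only [neg_one_mul] using this
  have hsum := (hT.add_const (∫ θ in (0:ℝ)..π, ff ν x ((θ - π / 2 : ℝ) * I) * I)).add hB
  have hsum2 := hsum.sub hlim
  rw [sub_zero] at hsum2
  refine tendsto_nhds_unique hG (hsum2.congr fun R => ?_)
  rw [hG', hT', hB', hM]
  ring

lemma besselJ_eq (ν : ℝ) {x : ℝ} (hx : 0 < x) : besselJ ν x = (H ν x).re := by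
  have h1 : H ν x = (1 / π : ℝ) * (Complex.exp (-(ν * π / 2 : ℝ) * I) * (-I)) *
      (Complex.exp (I * x) * G ν x) := by
    rw [H]
    have : Complex.exp (((x - ν * π / 2 - π / 2 : ℝ) : ℂ) * I) =
        Complex.exp (-(ν * π / 2 : ℝ) * I) * (-I) * Complex.exp (I * x) := by
      rw [← Complex.exp_neg_pi_div_two_mul_I, ← Complex.exp_add, ← Complex.exp_add]
      congr 1; push_cast; ring
    rw [this]; ring
  rw [h1, contour ν hx]
  simp only [ff_top, ff_bot, ff_mid]
  rw [integral_const_mul, integral_const_mul, integral_complex_ofReal, integral_complex_ofReal]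
  have hmid : ∫ θ in (0:ℝ)..π, Complex.exp ((ν * π / 2 : ℝ) * I) *
      Complex.exp ((x * Real.sin θ - ν * θ : ℝ) * I) * I =
      (Complex.exp ((ν * π / 2 : ℝ) * I) * I) *
      ∫ θ in (0:ℝ)..π, Complex.exp ((x * Real.sin θ - ν * θ : ℝ) * I) := by
    rw [← intervalIntegral.integral_const_mul]
    congr 1; ext θ; ring
  rw [hmid]
  set T := ∫ s in Set.Ioi (0:ℝ), Real.exp (-x * Real.sinh s - ν * s)
  set B := ∫ s in Set.Ioi (0:ℝ), Real.exp (-x * Real.sinh s + ν * s)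
  set M := ∫ θ in (0:ℝ)..π, Complex.exp ((x * Real.sin θ - ν * θ : ℝ) * I) with hMdef
  have hMre : M.re = ∫ θ in (0:ℝ)..π, Real.cos (x * Real.sin θ - ν * θ) := by
    have hi : IntervalIntegrable (fun θ : ℝ => Complex.exp ((x * Real.sin θ - ν * θ : ℝ) * I))
        volume 0 π := by
      apply Continuous.intervalIntegrable
      fun_prop
    have := Complex.reCLM.intervalIntegral_comp_comm hi
    simp only [Complex.reCLM_apply, Complex.exp_ofReal_mul_I_re] at this
    rw [hMdef, ← this]
  have hab : Complex.exp (-(ν * π / 2 : ℝ) * I) * Complex.exp ((ν * π / 2 : ℝ) * I) = 1 := by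
    rw [← Complex.exp_add]; simp
  have haa : Complex.exp (-(ν * π / 2 : ℝ) * I) * Complex.exp (-(ν * π / 2 : ℝ) * I) =
      (Real.cos (ν * π) : ℂ) - (Real.sin (ν * π) : ℂ) * I := by
    rw [← Complex.exp_add, show (-((ν * π / 2 : ℝ) : ℂ) * I + -((ν * π / 2 : ℝ) : ℂ) * I) =
      ((-(ν * π) : ℝ) : ℂ) * I by push_cast; ring, Complex.exp_mul_I, ← Complex.ofReal_cos,
      ← Complex.ofReal_sin, Real.cos_neg, Real.sin_neg]
    push_cast; ring
  have hfin : ((1 / π : ℝ) : ℂ) * (Complex.exp (-(ν * π / 2 : ℝ) * I) * (-I)) *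
      (Complex.exp (-(ν * π / 2 : ℝ) * I) * T + Complex.exp ((ν * π / 2 : ℝ) * I) * I * M +
        Complex.exp ((ν * π / 2 : ℝ) * I) * B) =
      ((1 / π : ℝ) : ℂ) * (M - ((Real.sin (ν * π) * T : ℝ) : ℂ)
        - ((Real.cos (ν * π) * T + B : ℝ) : ℂ) * I) := by
    push_cast at haa hab ⊢
    linear_combination ((1 / π : ℂ)) * (-I * T * haa + (-I * I * M - I * B) * hab) +
      (1 / π : ℂ) * (Complex.sin (ν * π) * T - M) * I_sq
  rw [hfin, Complex.re_ofReal_mul]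
  simp only [Complex.sub_re, Complex.ofReal_re, Complex.mul_re, Complex.I_re, Complex.I_im,
    Complex.ofReal_im, hMre]
  rw [besselJ]
  ring

end BZ

/-! ### Part 3: asymptotics of the amplitude -/

namespace BZ

open Filter Topology Complex

/-- symmetrized kernel -/
noncomputable def ks (ν x s : ℝ) : ℂ := (Real.exp (-x * q s) : ℝ) * (Complex.cosh (ν * w s) * w' s)

lemma ks_eq (ν x s : ℝ) : ks ν x s = (1 / 2 : ℂ) * (ee ν x s * w' s + ee (-ν) x s * w' s) := by
  rw [ks, Complex.cosh, ee, ee, Complex.ofReal_exp, sub_eq_add_neg, sub_eq_add_neg,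
    Complex.exp_add, Complex.exp_add]
  push_cast
  simp only [neg_mul, neg_neg]
  ring

lemma integrable_ks (ν : ℝ) {x : ℝ} (hx : 0 < x) : Integrable (ks ν x) := by
  refine (((integrable_ker ν hx).add (integrable_ker (-ν) hx)).const_mul (1 / 2)).congr
    (ae_of_all _ fun s => ?_)
  rw [ks_eq]; rfl

lemma G_neg (ν x : ℝ) : G (-ν) x = G ν x := by
  unfold G
  rw [← integral_neg_eq_self]
  congr 1; ext s
  rw [w'_neg, ee, ee, q_neg, w_neg]
  push_cast
  simp only [neg_mul, mul_neg, neg_neg]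

lemma G_eq_ks (ν : ℝ) {x : ℝ} (hx : 0 < x) : G ν x = ∫ s, ks ν x s := by
  simp only [ks_eq]
  rw [integral_const_mul, integral_add (integrable_ker ν hx) (integrable_ker (-ν) hx)]
  change _ = 1 / 2 * (G ν x + G (-ν) x)
  rw [G_neg]; ring

lemma im_cosh_w' (ν s : ℝ) : (Complex.cosh (ν * w s) * w' s).im =
    Real.sinh (ν * s) * Real.sin (ν * gd s) +
      Real.cosh (ν * s) * Real.cos (ν * gd s) * (1 / Real.cosh s) := by
  have e : (ν : ℂ) * w s = ((ν * s : ℝ) : ℂ) + ((ν * gd s : ℝ) : ℂ) * I := by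
    rw [w]; push_cast; ring
  rw [e, Complex.cosh_add, Complex.cosh_mul_I, Complex.sinh_mul_I, ← Complex.ofReal_cosh,
    ← Complex.ofReal_sinh, ← Complex.ofReal_cos, ← Complex.ofReal_sin, w']
  simp only [Complex.add_re, Complex.add_im, Complex.mul_re, Complex.mul_im, Complex.ofReal_re,
    Complex.ofReal_im, Complex.I_re, Complex.I_im, Complex.one_re, Complex.one_im]
  ring

lemma G_im_pos {ν : ℝ} (h0 : 0 ≤ ν) (h1 : ν < 1) {x : ℝ} (hx : 0 < x) : 0 < (G ν x).im := by
  rw [G_eq_ks ν hx]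
  have hintg := integrable_ks ν hx
  have e := Complex.imCLM.integral_comp_comm hintg
  simp only [Complex.imCLM_apply] at e
  rw [← e]
  have hpos : ∀ s, 0 < (ks ν x s).im := by
    intro s
    rw [ks, Complex.im_ofReal_mul, im_cosh_w']
    apply mul_pos (Real.exp_pos _)
    have hg1 : gd s < π / 2 := Real.arctan_lt_pi_div_two _
    have hg2 : -(π / 2) < gd s := Real.neg_pi_div_two_lt_arctan _
    have hpi := Real.pi_pos
    have hc : 0 < Real.cos (ν * gd s) := by
      apply Real.cos_pos_of_mem_Ioo
      constructor <;> nlinarith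
    have hb : 0 ≤ Real.sinh (ν * s) * Real.sin (ν * gd s) := by
      rcases le_total 0 s with hs | hs
      · have hg : 0 ≤ gd s := Real.arctan_nonneg.2 (Real.sinh_nonneg_iff.2 hs)
        exact mul_nonneg (Real.sinh_nonneg_iff.2 (mul_nonneg h0 hs))
          (Real.sin_nonneg_of_nonneg_of_le_pi (mul_nonneg h0 hg) (by nlinarith))
      · have hg : gd s ≤ 0 := by
          have : 0 ≤ gd (-s) := Real.arctan_nonneg.2 (Real.sinh_nonneg_iff.2 (by linarith))
          rw [gd_neg] at this; linarith
        exact mul_nonneg_of_nonpos_of_nonpos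
          (Real.sinh_nonpos_iff.2 (mul_nonpos_of_nonneg_of_nonpos h0 hs))
          (Real.sin_nonpos_of_nonpos_of_neg_pi_le (mul_nonpos_of_nonneg_of_nonpos h0 hg)
            (by nlinarith))
    have := mul_pos (mul_pos (Real.cosh_pos (ν * s)) hc) (inv_cosh_pos s)
    linarith
  rw [integral_pos_iff_support_of_nonneg (fun s => (hpos s).le) hintg.im]
  have : Function.support (fun s => (ks ν x s).im) = Set.univ := by
    ext s; simp [(hpos s).ne']
  rw [this]; simp

/-- leading amplitude -/
noncomputable def II (x : ℝ) : ℝ := ∫ s, Real.exp (-x * q s)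

lemma integrable_II {x : ℝ} (hx : 0 < x) : Integrable fun s => Real.exp (-x * q s) := by
  have := integrable_mb hx 0
  refine this.congr (ae_of_all _ fun s => ?_)
  simp [mb]

lemma II_ge {x : ℝ} (hx : 1 ≤ x) : Real.exp (-2) / √x ≤ II x := by
  have hx0 : 0 < x := by linarith
  have hsx : 0 < √x := Real.sqrt_pos.2 hx0
  have h1 : ∫ s in Set.Icc 0 (1 / √x), Real.exp (-2) ≤ ∫ s in Set.Icc 0 (1 / √x),
      Real.exp (-x * q s) := by
    apply setIntegral_mono_on (by simp) (integrable_II hx0).integrableOn measurableSet_Icc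
    intro s hs
    apply Real.exp_le_exp.2
    have h2 : s ^ 2 ≤ 1 / x := by
      have := pow_le_pow_left₀ hs.1 hs.2 2
      rwa [div_pow, one_pow, Real.sq_sqrt hx0.le] at this
    have h3 : (1 : ℝ) / x ≤ 1 := by rw [div_le_one hx0]; exact hx
    have h4 : q s ≤ 2 * s ^ 2 := by
      have a1 := Real.cosh_le_exp_half_sq s
      have a2 : Real.exp (-(s ^ 2 / 2)) ≤ 1 / Real.cosh s := by
        rw [Real.exp_neg, ← one_div]
        exact one_div_le_one_div_of_le (Real.cosh_pos s) a1
      have hs2 : |s ^ 2 / 2| = s ^ 2 / 2 := abs_of_nonneg (by positivity)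
      have a3 := Real.abs_exp_sub_one_le (x := s ^ 2 / 2) (by rw [hs2]; linarith)
      have a4 := Real.abs_exp_sub_one_le (x := -(s ^ 2 / 2)) (by rw [abs_neg, hs2]; linarith)
      rw [abs_neg] at a4
      rw [hs2] at a3 a4
      have a5 := (abs_le.1 a3).2
      have a6 := (abs_le.1 a4).1
      unfold q; linarith
    have h5 : x * s ^ 2 ≤ 1 := by
      have := mul_le_mul_of_nonneg_left h2 hx0.le
      rwa [mul_one_div_cancel hx0.ne'] at this
    have := mul_le_mul_of_nonneg_left h4 hx0.le
    linarith
  have h2 : ∫ s in Set.Icc 0 (1 / √x), Real.exp (-x * q s) ≤ II x :=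
    setIntegral_le_integral (integrable_II hx0) (ae_of_all _ fun s => (Real.exp_pos _).le)
  have h3 : ∫ s in Set.Icc 0 (1 / √x), Real.exp (-2) = Real.exp (-2) / √x := by
    rw [setIntegral_const]
    simp [Real.volume_real_Icc_of_le (show (0:ℝ) ≤ (√x)⁻¹ by positivity)]
    ring
  linarith

lemma norm_cosh_sub_one_le (z : ℂ) : ‖Complex.cosh z - 1‖ ≤ ‖z‖ ^ 2 / 2 * Real.exp ‖z‖ := by
  have h1 : Complex.cosh z - 1 = 2 * Complex.sinh (z / 2) ^ 2 := by
    have := Complex.cosh_two_mul (z / 2)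
    rw [show 2 * (z / 2) = z by ring] at this
    rw [this, Complex.cosh_sq]; ring
  have h2 : ‖Complex.sinh (z / 2)‖ ≤ ‖z / 2‖ * Real.exp ‖z / 2‖ := by
    have hd : ∀ y ∈ Metric.closedBall (0:ℂ) ‖z / 2‖, HasDerivWithinAt Complex.sinh (Complex.cosh y)
      (Metric.closedBall (0:ℂ) ‖z / 2‖) y := fun y _ => (Complex.hasDerivAt_sinh y).hasDerivWithinAt
    have := Convex.norm_image_sub_le_of_norm_hasDerivWithin_le (C := Real.exp ‖z / 2‖) hd
      (fun y hy => by
        rw [Complex.cosh, norm_div]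
        have hy : ‖y‖ ≤ ‖z / 2‖ := by simpa using hy
        have a1 : ‖Complex.exp y‖ ≤ Real.exp ‖z / 2‖ :=
          (Complex.norm_exp_le_exp_norm y).trans (Real.exp_le_exp.2 hy)
        have a2 : ‖Complex.exp (-y)‖ ≤ Real.exp ‖z / 2‖ :=
          (Complex.norm_exp_le_exp_norm (-y)).trans (Real.exp_le_exp.2 (by rwa [norm_neg]))
        have a3 := norm_add_le (Complex.exp y) (Complex.exp (-y))
        simp only [Complex.norm_ofNat]
        linarith) (convex_closedBall _ _) (x := 0) (y := z / 2) (Metric.mem_closedBall_self (norm_nonneg _)) (by simp)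
    simp only [Complex.sinh_zero, sub_zero] at this
    linarith
  have h3 : ‖z / 2‖ = ‖z‖ / 2 := by simp
  rw [h1, norm_mul, norm_pow, Complex.norm_ofNat]
  rw [h3] at h2
  have h4 := pow_le_pow_left₀ (norm_nonneg _) h2 2
  have h5 : (‖z‖ / 2 * Real.exp (‖z‖ / 2)) ^ 2 = ‖z‖ ^ 2 / 4 * Real.exp ‖z‖ := by
    rw [mul_pow, ← Real.exp_nat_mul]
    push_cast
    rw [show 2 * (‖z‖ / 2) = ‖z‖ by ring]; ring
  rw [h5] at h4
  linarith

lemma amp_bound {V ν : ℝ} (hν : |ν| ≤ V) (s : ℝ) :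
    ‖Complex.cosh (ν * w s) * w' s - (1 + I)‖ ≤ (4 * V ^ 2 + 1) * s ^ 2 * Real.exp (2 * V * |s|) := by
  have hV : 0 ≤ V := (abs_nonneg ν).trans hν
  have e : Complex.cosh (ν * w s) * w' s - (1 + I) =
      (Complex.cosh (ν * w s) - 1) * w' s + ((1 / Real.cosh s - 1 : ℝ) : ℂ) * I := by
    rw [w']; push_cast; ring
  have hn : ‖(ν : ℂ) * w s‖ ≤ 2 * V * |s| := by
    rw [norm_mul, Complex.norm_real, Real.norm_eq_abs]
    calc |ν| * ‖w s‖ ≤ V * (2 * |s|) := mul_le_mul hν (norm_w_le s) (norm_nonneg _) hV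
      _ = _ := by ring
  have h1 : ‖Complex.cosh (ν * w s) - 1‖ ≤ 2 * V ^ 2 * s ^ 2 * Real.exp (2 * V * |s|) := by
    refine (norm_cosh_sub_one_le _).trans ?_
    have h2 := pow_le_pow_left₀ (norm_nonneg _) hn 2
    have h3 : (2 * V * |s|) ^ 2 = 4 * V ^ 2 * s ^ 2 := by rw [mul_pow, sq_abs]; ring
    rw [h3] at h2
    exact mul_le_mul (by linarith) (Real.exp_le_exp.2 hn) (Real.exp_pos _).le (by positivity)
  have h2 : |1 / Real.cosh s - 1| ≤ s ^ 2 := by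
    have a2 : Real.exp (-(s ^ 2 / 2)) ≤ 1 / Real.cosh s := by
      rw [Real.exp_neg, ← one_div]
      exact one_div_le_one_div_of_le (Real.cosh_pos s) (Real.cosh_le_exp_half_sq s)
    have a3 := Real.add_one_le_exp (-(s ^ 2 / 2))
    rw [abs_le]
    constructor <;> nlinarith [inv_cosh_le s]
  have h3 : 1 ≤ Real.exp (2 * V * |s|) := Real.one_le_exp (by positivity)
  rw [e]
  refine (norm_add_le _ _).trans ?_
  rw [norm_mul, norm_mul, Complex.norm_I, Complex.norm_real, Real.norm_eq_abs, mul_one]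
  have h4 := mul_le_mul h1 (norm_w'_le s) (norm_nonneg _) (by positivity)
  have h5 : s ^ 2 * 1 ≤ s ^ 2 * Real.exp (2 * V * |s|) :=
    mul_le_mul_of_nonneg_left h3 (by positivity)
  linarith

lemma asymp (V : ℝ) : ∃ C : ℝ, 0 < C ∧ ∀ ν : ℝ, |ν| ≤ V → ∀ x : ℝ, 1 ≤ x →
    ‖G ν x - (1 + I) * II x‖ ≤ C / x * II x := by
  set A : ℝ := (4 * V ^ 2 + 1) * 8 * Real.exp (8 * V ^ 2) with hA
  have hA0 : 0 < A := by positivity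
  refine ⟨A * √(π * 4) * Real.exp 2, by positivity, fun ν hν x hx => ?_⟩
  have hx0 : 0 < x := by linarith
  have hV : 0 ≤ V := (abs_nonneg ν).trans hν
  have e : G ν x - (1 + I) * II x =
      ∫ s, (ks ν x s - (1 + I) * ((Real.exp (-x * q s) : ℝ) : ℂ)) := by
    have hi : Integrable fun s => ((Real.exp (-x * q s) : ℝ) : ℂ) := (integrable_II hx0).ofReal
    rw [integral_sub (integrable_ks ν hx0) (hi.const_mul _),
      ← G_eq_ks ν hx0, integral_const_mul, integral_complex_ofReal, II]
  have hb : ∀ s, ‖ks ν x s - (1 + I) * ((Real.exp (-x * q s) : ℝ) : ℂ)‖ ≤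
      A / x * Real.exp (-(x / 4) * s ^ 2) := by
    intro s
    have e1 : ks ν x s - (1 + I) * ((Real.exp (-x * q s) : ℝ) : ℂ) =
        ((Real.exp (-x * q s) : ℝ) : ℂ) * (Complex.cosh (ν * w s) * w' s - (1 + I)) := by
      rw [ks]; ring
    rw [e1, norm_mul, Complex.norm_real, Real.norm_eq_abs, abs_of_pos (Real.exp_pos _)]
    have h1 : s ^ 2 ≤ 8 / x * Real.exp (x / 8 * s ^ 2) := by
      have := Real.add_one_le_exp (x / 8 * s ^ 2)
      have h2 : x / 8 * s ^ 2 ≤ Real.exp (x / 8 * s ^ 2) := by linarith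
      have h3 := mul_le_mul_of_nonneg_left h2 (show 0 ≤ 8 / x by positivity)
      have h4 : 8 / x * (x / 8 * s ^ 2) = s ^ 2 := by field_simp
      linarith
    have h2 : Real.exp (2 * V * |s|) ≤ Real.exp (8 * V ^ 2) * Real.exp (x / 8 * s ^ 2) := by
      rw [← Real.exp_add]
      apply Real.exp_le_exp.2
      have a1 : 0 ≤ (8 * V - |s|) ^ 2 := sq_nonneg _
      have a2 : |s| ^ 2 = s ^ 2 := sq_abs s
      have a3 : s ^ 2 ≤ x * s ^ 2 := by nlinarith [sq_nonneg s]
      nlinarith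
    have h3 : Real.exp (-x * q s) ≤ Real.exp (-(x / 2) * s ^ 2) := by
      apply Real.exp_le_exp.2
      have := mul_le_mul_of_nonneg_left (q_ge s) hx0.le
      linarith
    calc _ ≤ Real.exp (-(x / 2) * s ^ 2) * ((4 * V ^ 2 + 1) * (8 / x * Real.exp (x / 8 * s ^ 2)) *
          (Real.exp (8 * V ^ 2) * Real.exp (x / 8 * s ^ 2))) := by
          apply mul_le_mul h3 _ (norm_nonneg _) (Real.exp_pos _).le
          refine (amp_bound hν s).trans ?_
          apply mul_le_mul _ h2 (Real.exp_pos _).le (by positivity)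
          exact mul_le_mul_of_nonneg_left h1 (by positivity)
      _ = A / x * (Real.exp (-(x / 2) * s ^ 2) * Real.exp (x / 8 * s ^ 2) *
          Real.exp (x / 8 * s ^ 2)) := by rw [hA]; ring
      _ = _ := by
          rw [← Real.exp_add, ← Real.exp_add]
          congr 2; ring
  have hgi := (integrable_exp_neg_mul_sq (by positivity : 0 < x / 4)).const_mul (A / x)
  have h1 : ‖G ν x - (1 + I) * II x‖ ≤ A / x * √(π / (x / 4)) := by
    rw [e, ← integral_gaussian, ← integral_const_mul]
    exact norm_integral_le_of_norm_le hgi (ae_of_all _ hb)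
  have h2 : √(π / (x / 4)) = √(π * 4) / √x := by
    rw [← Real.sqrt_div (by positivity)]
    congr 1; field_simp
  have h3 : 1 / √x ≤ Real.exp 2 * II x := by
    have := mul_le_mul_of_nonneg_left (II_ge hx) (Real.exp_pos 2).le
    rw [← mul_div_assoc, ← Real.exp_add] at this
    simpa using this
  rw [h2] at h1
  refine h1.trans ?_
  have h4 := mul_le_mul_of_nonneg_left h3 (show 0 ≤ A / x * √(π * 4) by positivity)
  calc _ = A / x * √(π * 4) * (1 / √x) := by ring
    _ ≤ _ := h4
    _ = _ := by ring

/-- leading phase -/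
noncomputable def Ph (ν x : ℝ) : ℝ := x - ν * π / 2 - π / 4

lemma H_asymp (V : ℝ) : ∃ C : ℝ, 0 < C ∧ ∀ ν : ℝ, |ν| ≤ V → ∀ x : ℝ, 1 ≤ x →
    ∃ (r : ℝ) (ε : ℂ), 0 < r ∧ ‖ε‖ ≤ C / x ∧
      H ν x = r * Complex.exp (Ph ν x * I) * (1 + ε) := by
  obtain ⟨C, hC, h⟩ := asymp V
  refine ⟨C, hC, fun ν hν x hx => ?_⟩
  have hII : 0 < II x := lt_of_lt_of_le (by
    have : 0 < √x := Real.sqrt_pos.2 (by linarith)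
    positivity) (II_ge hx)
  have hne : (1 + I : ℂ) ≠ 0 := by
    intro h; have := congrArg Complex.re h; simp at this
  have hIIc : (II x : ℂ) ≠ 0 := by exact_mod_cast hII.ne'
  have hn : 1 ≤ ‖(1 + I : ℂ)‖ := by
    have := Complex.abs_re_le_norm (1 + I); simpa using this
  refine ⟨√2 * II x / π, (G ν x - (1 + I) * II x) / ((1 + I) * II x), by positivity, ?_, ?_⟩
  · rw [norm_div, norm_mul, Complex.norm_real, Real.norm_eq_abs, abs_of_pos hII]
    rw [div_le_iff₀ (by positivity)]
    refine (h ν hν x hx).trans ?_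
    apply mul_le_mul_of_nonneg_left _ (by positivity)
    nlinarith
  · have e1 : (1 + (G ν x - (1 + I) * II x) / ((1 + I) * II x)) = G ν x / ((1 + I) * II x) := by
      field_simp; ring
    have e2 : Complex.exp (Ph ν x * I) = Complex.exp (((x - ν * π / 2 - π / 2 : ℝ) : ℂ) * I) *
        ((√2 / 2 : ℝ) * (1 + I)) := by
      have : ((√2 / 2 : ℝ) : ℂ) * (1 + I) = Complex.exp ((π / 4 : ℝ) * I) := by
        rw [Complex.exp_mul_I, ← Complex.ofReal_cos, ← Complex.ofReal_sin, Real.cos_pi_div_four,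
          Real.sin_pi_div_four]
        ring
      rw [this, ← Complex.exp_add]
      congr 1; rw [Ph]; push_cast; ring
    have e3 : ((√2 : ℝ) : ℂ) * ((√2 : ℝ) : ℂ) = 2 := by
      rw [← Complex.ofReal_mul]; norm_num
    have hpi : (π : ℂ) ≠ 0 := by exact_mod_cast Real.pi_ne_zero
    rw [e1, e2, H]
    push_cast
    field_simp
    rw [pow_two, e3]
    try ring

end BZ

/-! ### Part 4: the phase function -/

namespace BZ

open Filter Topology Complex

lemma const_of_deriv {E : Type*} [NormedAddCommGroup E] [NormedSpace ℝ E] {f : ℝ → E}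
    (hf : ∀ x : ℝ, 0 < x → HasDerivAt f 0 x) {a b : ℝ} (ha : 0 < a) (hb : 0 < b) : f a = f b := by
  refine IsOpen.is_const_of_deriv_eq_zero (𝕜 := ℝ) isOpen_Ioi (convex_Ioi (0:ℝ)).isPreconnected
    (fun x hx => (hf x hx).differentiableAt.differentiableWithinAt) (fun x hx => (hf x hx).deriv) ha hb

lemma stay_lt {f : ℝ → ℝ} {s : Set ℝ} (hs : IsPreconnected s) (hf : ContinuousOn f s) {c : ℝ}
    (hc : ∀ x ∈ s, f x ≠ c) {x₀ : ℝ} (h₀ : x₀ ∈ s) (hlt : f x₀ < c) : ∀ x ∈ s, f x < c := by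
  intro x hx
  by_contra h
  obtain ⟨y, hy, hyc⟩ := hs.intermediate_value h₀ hx hf ⟨hlt.le, not_lt.1 h⟩
  exact hc y hy hyc

lemma stay_gt {f : ℝ → ℝ} {s : Set ℝ} (hs : IsPreconnected s) (hf : ContinuousOn f s) {c : ℝ}
    (hc : ∀ x ∈ s, f x ≠ c) {x₀ : ℝ} (h₀ : x₀ ∈ s) (hlt : c < f x₀) : ∀ x ∈ s, c < f x := by
  intro x hx
  by_contra h
  obtain ⟨y, hy, hyc⟩ := hs.intermediate_value hx h₀ hf ⟨not_lt.1 h, hlt.le⟩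
  exact hc y hy hyc

/-- the Wronskian-type quantity -/
noncomputable def WW (ν x : ℝ) : ℝ := (H ν x * (starRingEnd ℂ) (H (ν + 1) x)).im

lemma WW_const (ν : ℝ) {a b : ℝ} (ha : 0 < a) (hb : 0 < b) : a * WW ν a = b * WW ν b := by
  refine const_of_deriv (f := fun x => x * WW ν x) (fun x hx => ?_) ha hb
  have h1 := hasDerivAt_H ν hx
  have h2 := hasDerivAt_H' (ν + 1) hx
  rw [add_sub_cancel_right] at h2
  have a1 := Complex.reCLM.hasFDerivAt.comp_hasDerivAt x h1
  have a2 := Complex.imCLM.hasFDerivAt.comp_hasDerivAt x h1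
  have b1 := Complex.reCLM.hasFDerivAt.comp_hasDerivAt x h2
  have b2 := Complex.imCLM.hasFDerivAt.comp_hasDerivAt x h2
  have h := (hasDerivAt_id x).mul ((a2.mul b1).sub (a1.mul b2))
  have e : (fun x => x * WW ν x) = (id * ((⇑imCLM ∘ fun y => H ν y) * (⇑reCLM ∘ fun y => H (ν + 1) y) -
      (⇑reCLM ∘ fun y => H ν y) * (⇑imCLM ∘ fun y => H (ν + 1) y))) := by
    funext y
    simp only [WW, mul_im, conj_re, conj_im, Pi.mul_apply, Pi.sub_apply, Function.comp, id, reCLM_apply,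
      imCLM_apply]
    ring
  rw [e]
  refine h.congr_deriv ?_
  simp [-ofReal_div, -ofReal_add]
  field_simp
  ring

lemma WW_pos (ν : ℝ) {x : ℝ} (hx : 0 < x) : 0 < WW ν x := by
  obtain ⟨C, hC, hA⟩ := H_asymp (|ν| + 1)
  set y : ℝ := max 1 (4 * C) with hy
  have hy1 : 1 ≤ y := le_max_left _ _
  have hy2 : C / y ≤ 1 / 4 := by
    rw [div_le_iff₀ (by linarith)]
    have := le_max_right 1 (4 * C)
    linarith
  obtain ⟨r, ε, hr, hε, e1⟩ := hA ν (by linarith) y hy1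
  obtain ⟨r', ε', hr', hε', e2⟩ := hA (ν + 1) (by
    have := abs_add_le ν 1
    simpa using this) y hy1
  have key : WW ν y = r * r' * ((1 + ε) * (starRingEnd ℂ) (1 + ε')).re := by
    rw [WW, e1, e2]
    have : (r * Complex.exp (Ph ν y * I) * (1 + ε) *
        (starRingEnd ℂ) (r' * Complex.exp (Ph (ν + 1) y * I) * (1 + ε'))) =
        ((r * r' : ℝ) : ℂ) * (I * ((1 + ε) * (starRingEnd ℂ) (1 + ε'))) := by
      have h3 : Complex.exp (Ph ν y * I) * Complex.exp (-(Ph (ν + 1) y * I)) = I := by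
        rw [← Complex.exp_add]
        refine Eq.trans ?_ Complex.exp_pi_div_two_mul_I
        congr 1
        simp only [Ph]
        push_cast
        ring
      rw [map_mul, map_mul, ← Complex.exp_conj, map_mul, conj_ofReal, conj_ofReal, conj_I, mul_neg]
      push_cast
      linear_combination (r * r' * (1 + ε) * (starRingEnd ℂ) (1 + ε')) * h3
    rw [this, im_ofReal_mul, Complex.I_mul_im]
  have hpos : 0 < ((1 + ε) * (starRingEnd ℂ) (1 + ε')).re := by
    have h1 : ((1 + ε) * (starRingEnd ℂ) (1 + ε')) =
      1 + (ε + (starRingEnd ℂ) ε' + ε * (starRingEnd ℂ) ε') := by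
      simp; ring
    rw [h1, add_re, one_re]
    have h2 := abs_re_le_norm (ε + (starRingEnd ℂ) ε' + ε * (starRingEnd ℂ) ε')
    have h3 : ‖ε + (starRingEnd ℂ) ε' + ε * (starRingEnd ℂ) ε'‖ ≤ ‖ε‖ + ‖ε'‖ + ‖ε‖ * ‖ε'‖ := by
      refine (norm_add_le _ _).trans ?_
      have := norm_add_le ε ((starRingEnd ℂ) ε')
      rw [norm_mul]
      rw [RCLike.norm_conj] at *
      linarith
    have h4 := neg_abs_le (ε + (starRingEnd ℂ) ε' + ε * (starRingEnd ℂ) ε').re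
    have h5 : ‖ε‖ ≤ 1 / 4 := hε.trans hy2
    have h6 : ‖ε'‖ ≤ 1 / 4 := hε'.trans hy2
    have h7 : ‖ε‖ * ‖ε'‖ ≤ 1 / 4 * (1 / 4) := by gcongr
    linarith
  have hy0 : 0 < y := by linarith
  have h := WW_const ν hx hy0
  have h8 : 0 < y * WW ν y := by rw [key]; positivity
  rw [← h] at h8
  exact pos_of_mul_pos_right h8 hx.le

lemma H_ne (ν : ℝ) {x : ℝ} (hx : 0 < x) : H ν x ≠ 0 := by
  intro h
  have := WW_pos ν hx
  simp [WW, h] at this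

/-- logarithmic derivative -/
noncomputable def DD (ν x : ℝ) : ℂ := ((ν / x : ℝ) * H ν x - H (ν + 1) x) / H ν x

lemma DD_im_pos (ν : ℝ) {x : ℝ} (hx : 0 < x) : 0 < (DD ν x).im := by
  have h := H_ne ν hx
  have h1 : DD ν x = (ν / x : ℝ) - H (ν + 1) x / H ν x := by
    rw [DD, sub_div, mul_div_cancel_right₀ _ h]
  have h2 : (DD ν x).im = WW ν x / normSq (H ν x) := by
    rw [h1, sub_im, ofReal_im, Complex.div_im, WW]
    simp
    ring
  rw [h2]
  exact div_pos (WW_pos ν hx) (normSq_pos.2 h)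

lemma continuousOn_DD (ν : ℝ) : ContinuousOn (DD ν) (Set.Ioi 0) := by
  have h (μ : ℝ) : ContinuousOn (fun y => H μ y) (Set.Ioi 0) := fun x hx =>
    (hasDerivAt_H μ hx).continuousAt.continuousWithinAt
  refine ContinuousOn.div (ContinuousOn.sub (ContinuousOn.mul ?_ (h _)) (h _)) (h _) fun x hx => H_ne ν hx
  refine Complex.continuous_ofReal.comp_continuousOn ?_
  exact continuousOn_const.div continuousOn_id fun x hx => (ne_of_gt hx)

lemma lift (ν : ℝ) : ∃ θ : ℝ → ℝ, (∀ x, 0 < x → HasDerivAt θ (DD ν x).im x) ∧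
    ∀ x, 0 < x → H ν x = ‖H ν x‖ * Complex.exp (θ x * I) := by
  set Λ : ℝ → ℂ := fun x => ∫ t in (1:ℝ)..x, DD ν t with hΛ
  have hd : ∀ x, 0 < x → HasDerivAt Λ (DD ν x) x := by
    intro x hx
    have hc := continuousOn_DD ν
    refine intervalIntegral.integral_hasDerivAt_right ?_
      (hc.stronglyMeasurableAtFilter isOpen_Ioi x hx) (hc.continuousAt (Ioi_mem_nhds hx))
    refine (hc.mono ?_).intervalIntegrable
    intro t ht
    exact lt_of_lt_of_le (lt_min one_pos hx) ht.1
  have hH : ∀ x, 0 < x → H ν x = H ν 1 * Complex.exp (Λ x) := by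
    intro x hx
    have := const_of_deriv (f := fun x => H ν x * Complex.exp (-Λ x)) (fun y hy => by
      have h := (hasDerivAt_H ν hy).mul (hd y hy).neg.cexp
      refine h.congr_deriv ?_
      rw [DD]
      field_simp [H_ne ν hy]
      ring) hx one_pos
    have h1 : Λ 1 = 0 := intervalIntegral.integral_same
    simp only [h1, neg_zero, Complex.exp_zero, mul_one] at this
    rw [← this, mul_assoc, ← Complex.exp_add]
    simp
  refine ⟨fun x => arg (H ν 1) + (Λ x).im, fun x hx => ?_, fun x hx => ?_⟩
  · exact (Complex.imCLM.hasFDerivAt.comp_hasDerivAt x (hd x hx)).const_add _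
  · have h1 : ‖H ν x‖ = ‖H ν 1‖ * Real.exp (Λ x).re := by
      rw [hH x hx, norm_mul, Complex.norm_exp]
    rw [h1, hH x hx]
    nth_rewrite 1 [← norm_mul_exp_arg_mul_I (H ν 1)]
    nth_rewrite 1 [← re_add_im (Λ x)]
    rw [mul_assoc, ← Complex.exp_add]
    push_cast
    rw [mul_assoc, ← Complex.exp_add]
    congr 2
    ring

lemma abs_lt_of_cos_pos {y : ℝ} (h1 : |y| ≤ π) (h2 : 0 < Real.cos y) : |y| < π / 2 := by
  by_contra h
  rw [← Real.cos_abs] at h2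
  have := Real.cos_nonpos_of_pi_div_two_le_of_le (not_lt.1 h) (by linarith [Real.pi_pos])
  linarith

lemma abs_le_of_sin {y : ℝ} (h1 : |y| < π / 2) : |y| ≤ π / 2 * |Real.sin y| := by
  have h := Real.mul_abs_le_abs_sin h1.le
  have : |y| = π / 2 * (2 / π * |y|) := by field_simp
  rw [this]
  gcongr

lemma phase_local (V : ℝ) : ∃ C X : ℝ, 0 < C ∧ 1 ≤ X ∧ ∀ ν : ℝ, |ν| ≤ V → ∀ x : ℝ, X ≤ x → ∀ t : ℝ,
    H ν x = ‖H ν x‖ * Complex.exp (t * I) →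
    0 < Real.cos (t - Ph ν x) ∧ |Real.sin (t - Ph ν x)| ≤ C / x := by
  obtain ⟨C, hC, hA⟩ := H_asymp V
  refine ⟨2 * C, max 1 (2 * C), by positivity, le_max_left _ _, fun ν hν x hx t ht => ?_⟩
  have hx1 : 1 ≤ x := (le_max_left _ _).trans hx
  have hx2 : 2 * C ≤ x := (le_max_right _ _).trans hx
  obtain ⟨r, ε, hr, hε, e⟩ := hA ν hν x hx1
  have hε2 : C / x ≤ 1 / 2 := by
    rw [div_le_iff₀ (by linarith)]; linarith
  have hn : ‖H ν x‖ = r * ‖1 + ε‖ := by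
    rw [e, norm_mul, norm_mul, Complex.norm_exp_ofReal_mul_I, Complex.norm_real, Real.norm_of_nonneg hr.le,
      mul_one]
  have h1 : (‖1 + ε‖ : ℂ) * Complex.exp ((t - Ph ν x : ℝ) * I) = 1 + ε := by
    rw [hn, e] at ht
    have : Complex.exp ((t - Ph ν x : ℝ) * I) = Complex.exp (t * I) * Complex.exp (-(Ph ν x * I)) := by
      rw [← Complex.exp_add]; congr 1; push_cast; ring
    rw [this]
    have h2 : Complex.exp (Ph ν x * I) * Complex.exp (-(Ph ν x * I)) = 1 := by
      rw [← Complex.exp_add]; simp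
    have hr' : (r : ℂ) ≠ 0 := by exact_mod_cast hr.ne'
    apply mul_left_cancel₀ hr'
    push_cast at ht
    linear_combination (-Complex.exp (-(Ph ν x * I))) * ht + (r * (1 + ε)) * h2
  have hre : ‖1 + ε‖ * Real.cos (t - Ph ν x) = 1 + ε.re := by
    have := congrArg re h1
    rwa [re_ofReal_mul, Complex.exp_ofReal_mul_I_re, add_re, one_re] at this
  have him : ‖1 + ε‖ * Real.sin (t - Ph ν x) = ε.im := by
    have := congrArg im h1
    rwa [im_ofReal_mul, Complex.exp_ofReal_mul_I_im, add_im, one_im, zero_add] at this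
  have hr2 := (abs_le.1 (abs_re_le_norm ε)).1
  have hp : 0 ≤ ‖1 + ε‖ := norm_nonneg _
  have hnl : 1 / 2 ≤ ‖1 + ε‖ := by
    have := re_le_norm (1 + ε)
    rw [add_re, one_re] at this
    linarith
  constructor
  · by_contra h
    have : ‖1 + ε‖ * Real.cos (t - Ph ν x) ≤ 0 := mul_nonpos_of_nonneg_of_nonpos hp (not_lt.1 h)
    linarith
  · have h3 : ‖1 + ε‖ * |Real.sin (t - Ph ν x)| ≤ C / x := by
      rw [← abs_of_nonneg hp, ← abs_mul, him]
      exact (abs_im_le_norm ε).trans hε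
    have h4 : 1 / 2 * |Real.sin (t - Ph ν x)| ≤ ‖1 + ε‖ * |Real.sin (t - Ph ν x)| := by gcongr
    have : 2 * C / x = 2 * (C / x) := by ring
    linarith

/-- normalized phase function -/
structure IsPhase (ν : ℝ) (θ : ℝ → ℝ) : Prop where
  deriv : ∀ x, 0 < x → HasDerivAt θ (DD ν x).im x
  eq : ∀ x, 0 < x → H ν x = ‖H ν x‖ * Complex.exp (θ x * I)
  lim : Tendsto (fun x => θ x - Ph ν x) atTop (𝓝 0)

lemma continuous_Ph (ν : ℝ) : Continuous (Ph ν) := by unfold Ph; fun_prop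

lemma phase_stay {ν X : ℝ} {θ : ℝ → ℝ} (hX : 0 < X) (hθ : ContinuousOn θ (Set.Ioi 0))
    (hc : ∀ x, X ≤ x → 0 < Real.cos (θ x - Ph ν x)) {x₀ : ℝ} (hx₀ : X ≤ x₀)
    (h0 : |θ x₀ - Ph ν x₀| < π / 2) : ∀ x, X ≤ x → |θ x - Ph ν x| < π / 2 := by
  have hcont : ContinuousOn (fun x => θ x - Ph ν x) (Set.Ici X) :=
    (hθ.mono fun x hx => lt_of_lt_of_le hX hx).sub (continuous_Ph ν).continuousOn
  have hpre : IsPreconnected (Set.Ici X) := (convex_Ici X).isPreconnected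
  rw [abs_lt] at h0
  intro x hx
  rw [abs_lt]
  constructor
  · refine stay_gt hpre hcont (fun y hy h => ?_) hx₀ h0.1 x hx
    have := hc y hy
    rw [h] at this
    simp at this
  · refine stay_lt hpre hcont (fun y hy h => ?_) hx₀ h0.2 x hx
    have := hc y hy
    rw [h] at this
    simp at this

lemma exists_phase (ν : ℝ) : ∃ θ, IsPhase ν θ := by
  obtain ⟨θ, hd, he⟩ := lift ν
  obtain ⟨C, X, hC, hX, hA⟩ := phase_local |ν|
  set n : ℤ := round ((θ X - Ph ν X) / (2 * π)) with hn
  have hX0 : 0 < X := by linarith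
  have he' : ∀ x, 0 < x → H ν x = ‖H ν x‖ * Complex.exp ((θ x - n * (2 * π) : ℝ) * I) := by
    intro x hx
    have : Complex.exp ((θ x - n * (2 * π) : ℝ) * I) = Complex.exp (θ x * I) := by
      push_cast
      rw [sub_mul, Complex.exp_sub]
      have : ((n:ℂ) * (2 * π) * I) = n * (2 * π * I) := by ring
      rw [this, Complex.exp_int_mul_two_pi_mul_I, div_one]
    rw [this]
    exact he x hx
  have hd' : ∀ x, 0 < x → HasDerivAt (fun x => θ x - n * (2 * π)) (DD ν x).im x := fun x hx =>
    (hd x hx).sub_const _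
  have hB := fun x (hx : X ≤ x) => hA ν le_rfl x hx _ (he' x (by linarith))
  have h0 : |θ X - n * (2 * π) - Ph ν X| < π / 2 := by
    refine abs_lt_of_cos_pos ?_ (hB X le_rfl).1
    have := abs_sub_round ((θ X - Ph ν X) / (2 * π))
    rw [← hn] at this
    have h2 : θ X - n * (2 * π) - Ph ν X = ((θ X - Ph ν X) / (2 * π) - n) * (2 * π) := by
      field_simp
      ring
    rw [h2, abs_mul, abs_of_pos (by positivity : 0 < 2 * π)]
    calc _ ≤ 1 / 2 * (2 * π) := by gcongr
      _ = π := by ring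
  have hs := phase_stay hX0 (θ := fun x => θ x - n * (2 * π))
    (fun x hx => (hd' x hx).continuousAt.continuousWithinAt) (fun x hx => (hB x hx).1) le_rfl h0
  refine ⟨_, hd', he', ?_⟩
  have hl : Tendsto (fun x : ℝ => π / 2 * (C / x)) atTop (𝓝 0) := by
    simpa using (tendsto_const_nhds.div_atTop tendsto_id : Tendsto (fun x : ℝ => C / x) atTop (𝓝 0)).const_mul (π / 2)
  refine squeeze_zero_norm' ?_ hl
  filter_upwards [eventually_ge_atTop X] with x hx
  rw [Real.norm_eq_abs]
  refine (abs_le_of_sin (hs x hx)).trans ?_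
  have := (hB x hx).2
  gcongr

lemma phase_quant (V : ℝ) : ∃ C X : ℝ, 0 < C ∧ 1 ≤ X ∧ ∀ ν : ℝ, |ν| ≤ V → ∀ θ, IsPhase ν θ →
    ∀ x : ℝ, X ≤ x → |θ x - Ph ν x| ≤ C / x ∧ |θ x - Ph ν x| < π / 2 := by
  obtain ⟨C, X, hC, hX, hA⟩ := phase_local V
  refine ⟨π / 2 * C, X, by positivity, hX, fun ν hν θ hθ => ?_⟩
  have hB := fun x (hx : X ≤ x) => hA ν hν x hx _ (hθ.eq x (by linarith))
  have hev : ∀ᶠ x in atTop, |θ x - Ph ν x| < π / 2 := by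
    have := hθ.lim.abs
    rw [abs_zero] at this
    exact this.eventually_lt_const (by positivity)
  obtain ⟨x₀, h0, hx₀⟩ := (hev.and (eventually_ge_atTop X)).exists
  have hs := phase_stay (by linarith)
    (fun x hx => (hθ.deriv x hx).continuousAt.continuousWithinAt) (fun x hx => (hB x hx).1) hx₀ h0
  intro x hx
  refine ⟨?_, hs x hx⟩
  refine (abs_le_of_sin (hs x hx)).trans ?_
  have := (hB x hx).2
  rw [mul_div_assoc]
  gcongr

end BZ

/-! ### Part 5: counting zeros -/

namespace BZ

open Filter Topology Complex

lemma IsPhase.continuousOn {ν : ℝ} {θ : ℝ → ℝ} (h : IsPhase ν θ) : ContinuousOn θ (Set.Ioi 0) :=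
  fun x hx => (h.deriv x hx).continuousAt.continuousWithinAt

lemma IsPhase.strictMono {ν : ℝ} {θ : ℝ → ℝ} (h : IsPhase ν θ) : StrictMonoOn θ (Set.Ioi 0) := by
  refine strictMonoOn_of_deriv_pos (convex_Ioi 0) h.continuousOn fun x hx => ?_
  rw [interior_Ioi] at hx
  rw [(h.deriv x hx).deriv]
  exact DD_im_pos ν hx

lemma IsPhase.besselJ_eq {ν : ℝ} {θ : ℝ → ℝ} (h : IsPhase ν θ) {x : ℝ} (hx : 0 < x) :
    besselJ ν x = ‖H ν x‖ * Real.cos (θ x) := by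
  rw [BZ.besselJ_eq ν hx, h.eq x hx, re_ofReal_mul, Complex.exp_ofReal_mul_I_re, norm_mul,
    Complex.norm_exp_ofReal_mul_I]
  simp

lemma norm_H_pos (ν : ℝ) {x : ℝ} (hx : 0 < x) : 0 < ‖H ν x‖ := norm_pos_iff.2 (H_ne ν hx)

lemma between_of_sin_pos {f : ℝ → ℝ} (hf : ContinuousOn f (Set.Ioi 0))
    (hs : ∀ x, 0 < x → 0 < Real.sin (f x)) {c : ℝ} (h0 : 0 < c) (h1 : c < π)
    (hl : Tendsto f atTop (𝓝 c)) : ∀ x, 0 < x → 0 < f x ∧ f x < π := by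
  obtain ⟨x₀, ⟨ha, hb⟩, hx₀⟩ := (((hl.eventually_const_lt h0).and (hl.eventually_lt_const h1)).and
    (eventually_gt_atTop 0)).exists
  have hpre : IsPreconnected (Set.Ioi (0:ℝ)) := (convex_Ioi 0).isPreconnected
  intro x hx
  constructor
  · refine stay_gt hpre hf (fun y hy h => ?_) hx₀ ha x hx
    have := hs y hy
    rw [h] at this
    simp at this
  · refine stay_lt hpre hf (fun y hy h => ?_) hx₀ hb x hx
    have := hs y hy
    rw [h] at this
    simp at this

lemma interlace {ν : ℝ} {θ φ : ℝ → ℝ} (h : IsPhase ν θ) (h' : IsPhase (ν + 1) φ) :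
    ∀ x, 0 < x → 0 < θ x - φ x ∧ θ x - φ x < π := by
  refine between_of_sin_pos (f := fun x => θ x - φ x) (h.continuousOn.sub h'.continuousOn) (fun x hx => ?_)
    (c := π / 2) (by positivity) (by linarith [Real.pi_pos]) ?_
  · have hW := WW_pos ν hx
    have e : WW ν x = ‖H ν x‖ * ‖H (ν + 1) x‖ * Real.sin (θ x - φ x) := by
      have h1 : H ν x * (starRingEnd ℂ) (H (ν + 1) x) = ((‖H ν x‖ * ‖H (ν + 1) x‖ : ℝ) : ℂ) *
          Complex.exp ((θ x - φ x : ℝ) * I) := by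
        have h2 : Complex.exp ((θ x - φ x : ℝ) * I) =
          Complex.exp (θ x * I) * Complex.exp (-(φ x * I)) := by
          rw [← Complex.exp_add]; congr 1; push_cast; ring
        have h3 : (starRingEnd ℂ) (H (ν + 1) x) = ‖H (ν + 1) x‖ * Complex.exp (-(φ x * I)) := by
          conv_lhs => rw [h'.eq x hx]
          rw [map_mul, ← Complex.exp_conj, map_mul, conj_ofReal, conj_ofReal, conj_I, mul_neg]
        rw [h2, h3]
        conv_lhs => rw [h.eq x hx]
        push_cast
        ring
      rw [WW, h1, im_ofReal_mul, Complex.exp_ofReal_mul_I_im]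
    rw [e] at hW
    exact pos_of_mul_pos_right hW (by positivity)
  · have := (h.lim.sub h'.lim).add_const (π / 2)
    simp only [sub_zero, zero_add] at this
    refine this.congr fun x => ?_
    simp only [Ph]
    ring

lemma hasDerivAt_J (ν : ℝ) {x : ℝ} (hx : 0 < x) : HasDerivAt (fun y => besselJ ν y)
    (besselJ (ν - 1) x - ν / x * besselJ ν x) x := by
  have h := Complex.reCLM.hasFDerivAt.comp_hasDerivAt x (hasDerivAt_H' ν hx)
  have e : (fun y => besselJ ν y) =ᶠ[𝓝 x] (⇑reCLM ∘ fun y => H ν y) := by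
    filter_upwards [Ioi_mem_nhds hx] with y hy
    exact BZ.besselJ_eq ν hy
  refine (h.congr_of_eventuallyEq e).congr_deriv ?_
  rw [BZ.besselJ_eq ν hx, BZ.besselJ_eq (ν - 1) hx, reCLM_apply, sub_re, re_ofReal_mul]

lemma integral_exp_le {ν x : ℝ} (hν : 0 < ν) (hx : 0 < x) :
    |∫ t in Set.Ioi (0:ℝ), Real.exp (-x * Real.sinh t - ν * t)| ≤ 1 / ν := by
  have h1 : IntegrableOn (fun t => Real.exp (-ν * t)) (Set.Ioi 0) := exp_neg_integrableOn_Ioi 0 hν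
  have h2 : ∫ t in Set.Ioi (0:ℝ), Real.exp (-ν * t) = 1 / ν := by
    rw [integral_exp_mul_Ioi (by linarith) 0]
    simp [neg_div_neg_eq]
  rw [abs_of_nonneg (integral_nonneg fun t => (Real.exp_pos _).le), ← h2]
  refine integral_mono_of_nonneg (Eventually.of_forall fun t => (Real.exp_pos _).le) h1 ?_
  filter_upwards [ae_restrict_mem measurableSet_Ioi] with t ht
  refine Real.exp_le_exp.2 ?_
  have : 0 ≤ Real.sinh t := Real.sinh_nonneg_iff.2 (le_of_lt ht)
  nlinarith [mul_nonneg hx.le this]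

lemma J_bound {ν : ℝ} (hν : 0 < ν) {x : ℝ} (hx : 0 < x) : |besselJ ν x| ≤ 1 + 1 / ν := by
  rw [besselJ]
  refine (abs_sub _ _).trans (add_le_add ?_ ?_)
  · have := intervalIntegral.norm_integral_le_of_norm_le_const (a := 0) (b := π) (C := 1)
      (f := fun θ => Real.cos (x * Real.sin θ - ν * θ)) (fun t _ => Real.abs_cos_le_one _)
    rw [Real.norm_eq_abs, sub_zero, abs_of_pos Real.pi_pos, one_mul] at this
    rw [abs_mul, abs_of_pos (by positivity : 0 < 1 / π)]
    calc _ ≤ 1 / π * π := by gcongr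
      _ = 1 := by field_simp
  · rw [abs_mul]
    have h1 : |Real.sin (ν * π) / π| ≤ 1 := by
      rw [abs_div, abs_of_pos Real.pi_pos, div_le_one Real.pi_pos]
      exact (Real.abs_sin_le_one _).trans (by linarith [Real.pi_gt_three])
    calc _ ≤ 1 * (1 / ν) := mul_le_mul h1 (integral_exp_le hν hx) (abs_nonneg _) zero_le_one
      _ = 1 / ν := one_mul _

lemma J_step {ν x₀ : ℝ} (hν : 0 < ν) (h : ∀ x, 0 < x → x ≤ x₀ → 0 < besselJ (ν - 1) x) :
    ∀ x, 0 < x → x ≤ x₀ → 0 < besselJ ν x := by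
  intro x hx hx0
  set f : ℝ → ℝ := fun y => y ^ ν * besselJ ν y with hf
  have hd : ∀ y, 0 < y → HasDerivAt f (y ^ ν * besselJ (ν - 1) y) y := by
    intro y hy
    have := (Real.hasDerivAt_rpow_const (p := ν) (Or.inl hy.ne')).mul (hasDerivAt_J ν hy)
    refine this.congr_deriv ?_
    rw [Real.rpow_sub_one hy.ne']
    ring
  have hm : StrictMonoOn f (Set.Ioc 0 x₀) := by
    refine strictMonoOn_of_deriv_pos (convex_Ioc 0 x₀)
      (fun y hy => (hd y hy.1).continuousAt.continuousWithinAt) fun y hy => ?_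
    have hy' := interior_subset hy
    rw [(hd y hy'.1).deriv]
    exact mul_pos (Real.rpow_pos_of_pos hy'.1 _) (h y hy'.1 hy'.2)
  by_contra hneg
  have hfx : f x ≤ 0 := mul_nonpos_of_nonneg_of_nonpos (Real.rpow_nonneg hx.le _) (not_lt.1 hneg)
  have h2 : f (x / 2) < f x := hm ⟨by positivity, by linarith⟩ ⟨hx, hx0⟩ (by linarith)
  have hlim : Tendsto f (𝓝[>] 0) (𝓝 0) := by
    have h3 : Tendsto (fun y : ℝ => y ^ ν * (1 + 1 / ν)) (𝓝[>] 0) (𝓝 0) := by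
      have : ContinuousAt (fun y : ℝ => y ^ ν * (1 + 1 / ν)) 0 :=
        (Real.continuousAt_rpow_const 0 ν (Or.inr hν.le)).mul_const _
      have h4 := this.tendsto.mono_left (nhdsWithin_le_nhds (s := Set.Ioi 0))
      simpa [Real.zero_rpow hν.ne'] using h4
    refine squeeze_zero_norm' ?_ h3
    filter_upwards [self_mem_nhdsWithin] with y hy
    have hy' : 0 < y := hy
    rw [hf, Real.norm_eq_abs, abs_mul, abs_of_nonneg (Real.rpow_nonneg hy'.le _)]
    exact mul_le_mul_of_nonneg_left (J_bound hν hy') (Real.rpow_nonneg hy'.le _)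
  have h5 : (0:ℝ) ≤ f (x / 2) := by
    refine le_of_tendsto hlim ?_
    filter_upwards [Ioo_mem_nhdsGT (show (0:ℝ) < x / 2 by positivity)] with y hy
    exact (hm ⟨hy.1, by linarith [hy.2]⟩ ⟨by positivity, by linarith⟩ hy.2).le
  linarith

lemma J_pos_small {ν : ℝ} (h0 : 0 ≤ ν) (h1 : ν < 1) :
    ∃ x₀, 0 < x₀ ∧ x₀ ≤ 1 ∧ ∀ x, 0 < x → x ≤ x₀ → 0 < besselJ ν x := by
  rcases h0.eq_or_lt with rfl | h0
  · refine ⟨1, one_pos, le_rfl, fun x hx hx1 => ?_⟩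
    rw [besselJ]
    simp only [zero_mul, Real.sin_zero, zero_div, sub_zero]
    refine mul_pos (by positivity) ?_
    refine intervalIntegral.intervalIntegral_pos_of_pos_on
      (Continuous.intervalIntegrable (by fun_prop) _ _) (fun t ht => ?_) Real.pi_pos
    have hs := Real.sin_pos_of_pos_of_lt_pi ht.1 ht.2
    have hs1 := Real.sin_le_one t
    have : x * Real.sin t ≤ 1 * 1 := by gcongr
    refine Real.cos_pos_of_mem_Ioo ⟨?_, ?_⟩
    · have : 0 < x * Real.sin t := by positivity
      linarith [Real.pi_pos]
    · linarith [Real.pi_gt_three]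
  · set F : ℝ → ℝ := fun x => ∫ θ in (0:ℝ)..π, Real.cos (x * Real.sin θ - (ν - 1) * θ) with hF
    have hFc : Continuous F :=
      intervalIntegral.continuous_parametric_intervalIntegral_of_continuous' (by fun_prop) _ _
    have ha : 0 < 1 - ν := by linarith
    have hsin : 0 < Real.sin ((1 - ν) * π) := by
      refine Real.sin_pos_of_pos_of_lt_pi (by positivity) ?_
      nlinarith [Real.pi_pos]
    have hF0 : 0 < F 0 := by
      have : F 0 = Real.sin ((1 - ν) * π) / (1 - ν) := by
        simp only [hF, zero_mul, zero_sub]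
        have e : ∀ θ : ℝ, -((ν - 1) * θ) = (1 - ν) * θ := fun θ => by ring
        simp only [e]
        rw [intervalIntegral.integral_comp_mul_left (fun y => Real.cos y) ha.ne', integral_cos]
        simp
        field_simp
      rw [this]
      positivity
    obtain ⟨δ, hδ, hδF⟩ := Metric.eventually_nhds_iff.1 (hFc.continuousAt.eventually_const_lt hF0)
    refine ⟨min 1 (δ / 2), by positivity, min_le_left _ _, ?_⟩
    refine J_step h0 fun x hx hx0 => ?_
    have h2 : 0 < F x := hδF (by
      rw [Real.dist_eq, sub_zero, abs_of_pos hx]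
      have := min_le_right 1 (δ / 2)
      linarith)
    have h3 : Real.sin ((ν - 1) * π) = - Real.sin ((1 - ν) * π) := by
      rw [← Real.sin_neg]; congr 1; ring
    have h4 : 0 ≤ ∫ t in Set.Ioi (0:ℝ), Real.exp (-x * Real.sinh t - (ν - 1) * t) :=
      integral_nonneg fun t => (Real.exp_pos _).le
    rw [besselJ, h3, neg_div, neg_mul, sub_neg_eq_add]
    have : 0 < 1 / π * F x := by positivity
    have h5 : 0 ≤ Real.sin ((1 - ν) * π) / π *
      ∫ t in Set.Ioi (0:ℝ), Real.exp (-x * Real.sinh t - (ν - 1) * t) := by positivity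
    linarith

/-- behaviour near the origin -/
def PP (ν : ℝ) : Prop := ∃ x₀, 0 < x₀ ∧ x₀ ≤ 1 ∧ (∀ x, 0 < x → x ≤ x₀ → 0 < besselJ ν x) ∧
  ∀ θ, IsPhase ν θ → |θ x₀| < π / 2

lemma cos_pos_of_J {ν : ℝ} {θ : ℝ → ℝ} (h : IsPhase ν θ) {x : ℝ} (hx : 0 < x) (hJ : 0 < besselJ ν x) :
    0 < Real.cos (θ x) := by
  rw [h.besselJ_eq hx] at hJ
  exact pos_of_mul_pos_right hJ (norm_nonneg _)

lemma PP_base {ν : ℝ} (h0 : 0 ≤ ν) (h1 : ν < 1) : PP ν := by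
  obtain ⟨x₀, hx₀, hx1, hJ⟩ := J_pos_small h0 h1
  refine ⟨x₀, hx₀, hx1, hJ, fun θ hθ => ?_⟩
  refine abs_lt_of_cos_pos ?_ (cos_pos_of_J hθ hx₀ (hJ x₀ hx₀ le_rfl))
  have key := between_of_sin_pos (f := fun x => θ x - (x - ν * π / 2 - π / 2))
    (hθ.continuousOn.sub (by fun_prop)) (fun x hx => ?_) (c := π / 4) (by positivity)
    (by linarith [Real.pi_pos]) ?_ x₀ hx₀
  · have := Real.pi_gt_three
    have h2 : ν * π ≤ 1 * π := by gcongr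
    have h3 : 0 ≤ ν * π := by positivity
    rw [abs_le]
    constructor
    · linarith [key.1]
    · linarith [key.2]
  · have hG := G_im_pos h0 h1 hx
    have e : G ν x = ((π * ‖H ν x‖ : ℝ) : ℂ) *
        Complex.exp ((θ x - (x - ν * π / 2 - π / 2) : ℝ) * I) := by
      have h2 : Complex.exp ((θ x - (x - ν * π / 2 - π / 2) : ℝ) * I) =
          Complex.exp (θ x * I) * Complex.exp (-(((x - ν * π / 2 - π / 2 : ℝ) : ℂ) * I)) := by
        rw [← Complex.exp_add]; congr 1; push_cast; ring
      have h3 : Complex.exp (((x - ν * π / 2 - π / 2 : ℝ) : ℂ) * I) *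
          Complex.exp (-(((x - ν * π / 2 - π / 2 : ℝ) : ℂ) * I)) = 1 := by
        rw [← Complex.exp_add]; simp
      have h4 := hθ.eq x hx
      have h5 : H ν x = (1 / π : ℝ) * Complex.exp (((x - ν * π / 2 - π / 2 : ℝ) : ℂ) * I) * G ν x := rfl
      have hpi : (π : ℂ) * (1 / π : ℝ) = 1 := by
        rw [← ofReal_mul]; simp [Real.pi_ne_zero]
      rw [h2, ofReal_mul]
      generalize Complex.exp (((x - ν * π / 2 - π / 2 : ℝ) : ℂ) * I) = A at *
      generalize Complex.exp (-(((x - ν * π / 2 - π / 2 : ℝ) : ℂ) * I)) = B at *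
      have h6 := h5.symm.trans h4
      linear_combination (-G ν x) * h3 + (-(A * B * G ν x)) * hpi + π * B * h6
    rw [e, im_ofReal_mul, Complex.exp_ofReal_mul_I_im] at hG
    exact pos_of_mul_pos_right hG (by positivity)
  · have := hθ.lim.add_const (π / 4)
    rw [zero_add] at this
    refine this.congr fun x => ?_
    simp only [Ph]
    ring

lemma PP_succ {ν : ℝ} (h0 : 0 ≤ ν) (h : PP ν) : PP (ν + 1) := by
  obtain ⟨x₀, hx₀, hx1, hJ, hθ⟩ := h
  have hJ' : ∀ x, 0 < x → x ≤ x₀ → 0 < besselJ (ν + 1) x :=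
    J_step (by linarith) (by rwa [add_sub_cancel_right])
  refine ⟨x₀, hx₀, hx1, hJ', fun φ hφ => ?_⟩
  obtain ⟨θ, ht⟩ := exists_phase ν
  have h1 := abs_lt.1 (hθ θ ht)
  have h2 := interlace ht hφ x₀ hx₀
  have h3 := cos_pos_of_J hφ hx₀ (hJ' x₀ hx₀ le_rfl)
  rw [abs_lt]
  refine ⟨?_, by linarith⟩
  by_contra hc
  rw [← Real.cos_neg] at h3
  have := Real.cos_nonpos_of_pi_div_two_le_of_le (x := -φ x₀) (by linarith [not_lt.1 hc]) (by linarith)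
  linarith

lemma PP_all {ν : ℝ} (h0 : 0 ≤ ν) : PP ν := by
  have h : ∀ n : ℕ, PP (Int.fract ν + n) := by
    intro n
    induction n with
    | zero => simpa using PP_base (Int.fract_nonneg ν) (Int.fract_lt_one ν)
    | succ n ih =>
      have := PP_succ (by have := Int.fract_nonneg ν; positivity) ih
      push_cast
      rwa [← add_assoc]
  have h2 := h ⌊ν⌋.toNat
  have h3 : ((⌊ν⌋.toNat : ℕ) : ℝ) = (⌊ν⌋ : ℝ) := by
    have : ((⌊ν⌋.toNat : ℕ) : ℤ) = ⌊ν⌋ := Int.toNat_of_nonneg (Int.floor_nonneg.2 h0)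
    exact_mod_cast congrArg (Int.cast : ℤ → ℝ) this
  rwa [h3, Int.fract_add_floor] at h2

lemma phase_gt {ν : ℝ} (h0 : 0 ≤ ν) {θ : ℝ → ℝ} (h : IsPhase ν θ) :
    (∀ x, 0 < x → -(π / 2) < θ x) ∧ ∃ x₀, 0 < x₀ ∧ θ x₀ < π / 2 := by
  obtain ⟨x₀, hx₀, hx1, hJ, hθ⟩ := PP_all h0
  have h1 := abs_lt.1 (hθ θ h)
  refine ⟨fun x hx => ?_, x₀, hx₀, h1.2⟩
  rcases le_or_gt x x₀ with hle | hlt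
  · refine stay_gt (s := Set.Ioc 0 x₀) (convex_Ioc 0 x₀).isPreconnected
      (h.continuousOn.mono fun y hy => hy.1) (fun y hy he => ?_) ⟨hx₀, le_rfl⟩ h1.1 x ⟨hx, hle⟩
    have := cos_pos_of_J h hy.1 (hJ y hy.1 hy.2)
    rw [he] at this
    simp at this
  · exact h1.1.trans (h.strictMono hx₀ hx hlt)

lemma phase_zero {ν : ℝ} (h0 : 0 ≤ ν) {θ : ℝ → ℝ} (h : IsPhase ν θ) {x : ℝ} (hx : 0 < x)
    (hJ : besselJ ν x = 0) : ∃ m : ℕ, θ x = (2 * m + 1) * π / 2 := by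
  rw [h.besselJ_eq hx] at hJ
  have hc : Real.cos (θ x) = 0 := (mul_eq_zero.1 hJ).resolve_left (norm_H_pos ν hx).ne'
  obtain ⟨n, hn⟩ := Real.cos_eq_zero_iff.1 hc
  have h1 := (phase_gt h0 h).1 x hx
  have h2 : 0 ≤ n := by
    by_contra hneg
    have h3 : n ≤ -1 := by omega
    have h4 : (n : ℝ) ≤ -1 := by exact_mod_cast h3
    rw [hn] at h1
    nlinarith [Real.pi_pos]
  lift n to ℕ using h2
  exact ⟨n, by simpa using hn⟩

lemma phase_count {ν : ℝ} (h0 : 0 ≤ ν) {θ : ℝ → ℝ} (h : IsPhase ν θ) {j : ℝ} (hj : 0 < j)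
    {m : ℕ} (hm : θ j = (2 * m + 1) * π / 2) :
    {x : ℝ | 0 < x ∧ x < j ∧ besselJ ν x = 0}.ncard = m := by
  have hpi := Real.pi_pos
  have hinj : Set.InjOn θ {x : ℝ | 0 < x ∧ x < j ∧ besselJ ν x = 0} :=
    h.strictMono.injOn.mono fun x hx => hx.1
  have hv : StrictMono (fun i : ℕ => (2 * (i:ℝ) + 1) * π / 2) := by
    intro a b hab
    have : (a:ℝ) < b := by exact_mod_cast hab
    have := mul_lt_mul_of_pos_right this hpi
    show (2 * (a:ℝ) + 1) * π / 2 < (2 * (b:ℝ) + 1) * π / 2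
    linarith
  have himg : Set.image θ {x : ℝ | 0 < x ∧ x < j ∧ besselJ ν x = 0} =
      Set.image (fun i : ℕ => (2 * (i:ℝ) + 1) * π / 2) (Finset.range m : Set ℕ) := by
    ext y
    constructor
    · rintro ⟨x, ⟨hx, hxj, hJ⟩, rfl⟩
      obtain ⟨i, hi⟩ := phase_zero h0 h hx hJ
      have hlt := h.strictMono hx hj hxj
      rw [hi, hm] at hlt
      refine ⟨i, ?_, hi.symm⟩
      have := hv.lt_iff_lt.1 hlt
      simpa using this
    · rintro ⟨i, hi, rfl⟩
      have him : i < m := by simpa using hi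
      obtain ⟨x₀, hx₀, hlt⟩ := (phase_gt h0 h).2
      have h1 : (2 * (i:ℝ) + 1) * π / 2 < θ j := by rw [hm]; exact hv him
      have h2 : θ x₀ < (2 * (i:ℝ) + 1) * π / 2 := by
        have : 0 ≤ (i:ℝ) * π := by positivity
        linarith
      have hxj : x₀ < j := (h.strictMono.lt_iff_lt hx₀ hj).1 (h2.trans h1)
      obtain ⟨x, hx, hxe⟩ := intermediate_value_Ioo hxj.le
        (h.continuousOn.mono fun y hy => lt_of_lt_of_le hx₀ hy.1) ⟨h2, h1⟩
      have hx0 : 0 < x := hx₀.trans hx.1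
      refine ⟨x, ⟨hx0, hx.2, ?_⟩, hxe⟩
      rw [h.besselJ_eq hx0, hxe]
      have : Real.cos ((2 * (i:ℝ) + 1) * π / 2) = 0 := Real.cos_eq_zero_iff.2 ⟨i, by push_cast; ring⟩
      rw [this, mul_zero]
  rw [← hinj.ncard_image, himg, Set.ncard_image_of_injective _ hv.injective,
    Set.ncard_coe_finset, Finset.card_range]

lemma phase_at_zero {ν : ℝ} (h0 : 0 ≤ ν) {θ : ℝ → ℝ} (h : IsPhase ν θ) {k : ℕ} (hk : 2 ≤ k) {j : ℝ}
    (hj : IsKthZero ν k j) : θ j = ((k:ℝ) - 1 / 2) * π := by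
  obtain ⟨hj0, hJ, hn⟩ := hj
  obtain ⟨m, hm⟩ := phase_zero h0 h hj0 hJ
  rw [phase_count h0 h hj0 hm] at hn
  rw [hm, hn, Nat.cast_sub (by omega)]
  push_cast
  ring

lemma g_approx {ν j : ℝ} (h0 : 0 ≤ ν) (hj : 0 < j) (hle : ν ≤ j) :
    |j * gfun (ν / j) - (j / π - ν / 2)| ≤ ν ^ 2 / j := by
  have hpi := Real.pi_gt_three
  set t := ν / j with ht
  have ht0 : 0 ≤ t := by positivity
  have ht1 : t ≤ 1 := (div_le_one hj).2 hle
  have htj : j * t = ν := by rw [ht]; field_simp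
  have hs1 : Real.sqrt (1 - t ^ 2) ≤ 1 := Real.sqrt_le_one.2 (by nlinarith)
  have hs2 : 1 - t ^ 2 ≤ Real.sqrt (1 - t ^ 2) := by
    refine Real.le_sqrt_of_sq_le ?_
    have : 0 ≤ 1 - t ^ 2 := by nlinarith
    nlinarith [sq_nonneg t]
  have ha0 : 0 ≤ Real.arcsin t := Real.arcsin_nonneg.2 ht0
  have ha1 : Real.arcsin t ≤ π / 2 * t := by
    have := Real.mul_le_sin ha0 (Real.arcsin_le_pi_div_two t)
    rw [Real.sin_arcsin (by linarith) ht1] at this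
    calc Real.arcsin t = π / 2 * (2 / π * Real.arcsin t) := by field_simp
      _ ≤ _ := by gcongr
  have hsq : ν ^ 2 / j = j * t ^ 2 := by rw [ht]; field_simp
  have e : j * gfun t - (j / π - ν / 2) =
      (j * (Real.sqrt (1 - t ^ 2) - 1) + j * (t * Real.arcsin t)) / π := by
    rw [gfun, Real.arccos, ← htj]
    field_simp
    ring
  rw [e, hsq, abs_div, abs_of_pos Real.pi_pos, div_le_iff₀ Real.pi_pos, abs_le]
  have b1 : j * (1 - t ^ 2) ≤ j * Real.sqrt (1 - t ^ 2) := by gcongr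
  have b2 : j * Real.sqrt (1 - t ^ 2) ≤ j * 1 := by gcongr
  have b3 : j * (t * Real.arcsin t) ≤ j * (t * (π / 2 * t)) := by gcongr
  have b4 : 0 ≤ j * (t * Real.arcsin t) := by positivity
  have b5 : 0 ≤ j * t ^ 2 := by positivity
  constructor <;> nlinarith

theorem main (V : ℝ) (hV : 0 < V) :
    ∃ K C : ℝ, 0 < K ∧ 0 < C ∧ ∀ ν : ℝ, 0 ≤ ν → ν ≤ V → ∀ k : ℕ, K ≤ (k : ℝ) → ∀ j : ℝ,
      IsKthZero ν k j →
      |j * gfun (ν / j) - ((k : ℝ) - 1 / 4)| ≤ C / (ν + (k : ℝ)) := by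
  obtain ⟨C, X, hC, hX, hQ⟩ := phase_quant V
  refine ⟨X + 4, C + V ^ 2, by linarith, by positivity, fun ν h0 hν k hk j hj => ?_⟩
  have hpi := Real.pi_gt_three
  have hpi4 := Real.pi_lt_four
  obtain ⟨θ, hθ⟩ := exists_phase ν
  have hk2 : 2 ≤ k := by
    have : (2:ℝ) ≤ k := by linarith
    exact_mod_cast this
  have hkr : (5:ℝ) ≤ k := by linarith
  have hz := phase_at_zero h0 hθ hk2 hj
  have hj0 : 0 < j := hj.1
  have hB := hQ ν (by rwa [abs_of_nonneg h0]) θ hθ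
  have hνπ : ν * 3 ≤ ν * π := by gcongr
  have hkπ : ((k:ℝ) - 3 / 4) * 3 ≤ ((k:ℝ) - 3 / 4) * π :=
    mul_le_mul_of_nonneg_left hpi.le (by linarith)
  have hjX : X ≤ j := by
    by_contra hlt
    have h1 := hθ.strictMono hj0 (show (0:ℝ) < X by linarith) (not_le.1 hlt)
    have h2 := (abs_lt.1 (hB X le_rfl).2).2
    rw [Ph] at h2
    rw [hz] at h1
    nlinarith
  obtain ⟨h1, h2⟩ := hB j hjX
  rw [hz] at h1 h2
  have hjk : ν + k ≤ j := by
    have := (abs_lt.1 h2).2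
    rw [Ph] at this
    linarith
  have hg := g_approx h0 hj0 (by linarith)
  have h3 : |j / π - ν / 2 - ((k:ℝ) - 1 / 4)| ≤ C / j := by
    have e : j / π - ν / 2 - ((k:ℝ) - 1 / 4) = -((((k:ℝ) - 1 / 2) * π - Ph ν j) / π) := by
      rw [Ph]
      field_simp
      ring
    rw [e, abs_neg, abs_div, abs_of_pos Real.pi_pos]
    refine (div_le_self (abs_nonneg _) (by linarith)).trans h1
  have h4 : ν ^ 2 / j ≤ V ^ 2 / j := by gcongr
  have h5 : (C + V ^ 2) / j ≤ (C + V ^ 2) / (ν + k) := by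
    apply div_le_div_of_nonneg_left (by positivity) (by linarith) hjk
  have h6 : (C + V ^ 2) / j = C / j + V ^ 2 / j := add_div _ _ _
  have h7 := abs_sub_le (j * gfun (ν / j)) (j / π - ν / 2) ((k:ℝ) - 1 / 4)
  linarith

end BZ

/-- for bounded `0 ≤ ν ≤ V` and large `k`, the zeros satisfy
`j g(ν/j) = k - 1/4 + O_V(1/(ν+k))`. -/
theorem zero_approx_small_nu (V : ℝ) (hV : 0 < V) :
    ∃ K C : ℝ, 0 < K ∧ 0 < C ∧ ∀ ν : ℝ, 0 ≤ ν → ν ≤ V → ∀ k : ℕ, K ≤ (k : ℝ) → ∀ j : ℝ,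
      IsKthZero ν k j →
      |j * gfun (ν / j) - ((k : ℝ) - 1 / 4)| ≤ C / (ν + (k : ℝ)) := by
  exact BZ.main V hV
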